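/- arXiv:1403.0266 — 2 statements merged into one kernel-verified Lean document; each statement's English description precedes it below -/
import Mathlib

section
/- Let D ⊂ ℂ^n be a bounded domain with smooth boundary and F : D → D' a proper holomorphic map admitting a C¹ extension to the closure of D. Let Z_F ∩ ∂D := { x ∈ ∂D : det 𝕁_F(x) = 0 }, where 𝕁_F(x) is the real Jacobian matrix at x of the extension of F, viewed as a C¹ map between open subsets of ℝ^{2n}. Then the (2n−1)-dimensional Hausdorff measure of F(Z_F ∩ ∂D) is zero. -/
/-!
The boundary is a real hypersurface, of dimension `m = 2n - 1`, and the claim is a Sard-type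
statement on it.  The differential of the `C¹` extension `G` is complex linear on `D`, hence by
continuity also on `∂D` (`fderiv_smul_I_of_mem_closure`).  Its real rank is therefore even, so at a
boundary point where the real Jacobian determinant vanishes this rank is at most `2n - 2 < m`, and
`dG` composed with any linear map from `ℝ^m` has a nontrivial kernel (`exists_ker_comp`).
Parametrizing `∂D` locally by pieces of `ℝ^m` through the implicit function theorem
(`exists_levelSet_param`), it remains to show that a map `f` from a subset `s` of `ℝ^m` to a normed
space whose differential is nowhere injective on `s` satisfies `μH[m] (f '' s) = 0`
(`hausdorff_image_eq_zero`).

For this last point, `s` is cut into countably many pieces on which `f` is `δ`-close to a linear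
map `A` with `A v = 0`, `v ≠ 0`.  Let `T` contract the direction `v` by the factor `δ`.  On such a
piece `f ∘ T⁻¹` is Lipschitz with a constant `C` independent of `δ`, so the image of the piece has
measure at most `C ^ m * δ` times the volume of the piece (`exists_hausdorff_image_le`), and
`C ^ m * δ` can be made arbitrarily small.
-/

open Metric Set Filter Topology MeasureTheory

noncomputable section

/-- `ℂⁿ` as a complex Euclidean space. -/
abbrev Cn (n : ℕ) := EuclideanSpace ℂ (Fin n)

/-- Points of the open unit ball `Bⁿ ⊆ ℂⁿ`. -/
abbrev BallPt (n : ℕ) := ↥(Metric.ball (0 : Cn n) 1)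

/-- The pseudoellipsoid `E^n_(p)`. -/
def pseudoEllipsoid (n k : ℕ) (hk : k ≤ n) (p : Fin k → ℕ) : Set (Cn n) :=
  { z | (∑ j : Fin (n - k), ‖z (Fin.castLE (Nat.sub_le n k) j)‖ ^ 2)
      + ∑ i : Fin k, ‖z ⟨n - k + (i : ℕ), by have := i.isLt; omega⟩‖ ^ (2 * p i) < 1 }

/-- The map `φ^(p)`. -/
def phiMap (n k : ℕ) (hk : k ≤ n) (p : Fin k → ℕ) (z : Cn n) : Cn n :=
  (EuclideanSpace.equiv (Fin n) ℂ).symm fun j =>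
    if _h : (j : ℕ) < n - k then z j
    else z j ^ (p ⟨(j : ℕ) - (n - k), by have := j.isLt; omega⟩)

/-- `f : D → Ω` is proper: preimages of compact subsets of `Ω` are compact. -/
def ProperOn (n : ℕ) (f : Cn n → Cn n) (D Ω : Set (Cn n)) : Prop :=
  ∀ K ⊆ Ω, IsCompact K → IsCompact {z ∈ D | f z ∈ K}

/-- Determinant of the complex Jacobian of `f` at `z`. -/
def cDet (n : ℕ) (f : Cn n → Cn n) (z : Cn n) : ℂ :=
  LinearMap.det ((fderiv ℂ f z : Cn n →L[ℂ] Cn n) : Cn n →ₗ[ℂ] Cn n)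

/-- The singular locus `Z_F` of `f` in `D`. -/
def singularSet (n : ℕ) (f : Cn n → Cn n) (D : Set (Cn n)) : Set (Cn n) :=
  {z ∈ D | cDet n f z = 0}

/-- `f : D → Ω` has multiplicity `m`: each fiber over a point outside the
critical value set `f(Z_f)` has cardinality `m`. -/
def HasMultiplicity (n : ℕ) (f : Cn n → Cn n) (D Ω : Set (Cn n)) (m : ℕ) : Prop :=
  ∀ w ∈ Ω \ (f '' singularSet n f D), (D ∩ f ⁻¹' {w}).ncard = m

/-- `f` extends to a `C¹` map on (a neighbourhood of) the closure of `D`. -/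
def HasC1Extension (n : ℕ) (f : Cn n → Cn n) (D : Set (Cn n)) : Prop :=
  ∃ (U : Set (Cn n)) (g : Cn n → Cn n), IsOpen U ∧ closure D ⊆ U ∧
    ContDiffOn ℝ 1 g U ∧ EqOn g f D

/-- Determinant of the real Jacobian `𝕁_f(x)` (ℂⁿ viewed as ℝ²ⁿ). -/
def rDet (n : ℕ) (f : Cn n → Cn n) (x : Cn n) : ℝ :=
  LinearMap.det ((fderiv ℝ f x : Cn n →L[ℝ] Cn n) : Cn n →ₗ[ℝ] Cn n)

/-- Rank of the real Jacobian `𝕁_f(x)`. -/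
def rRank (n : ℕ) (f : Cn n → Cn n) (x : Cn n) : ℕ :=
  Module.finrank ℝ (LinearMap.range ((fderiv ℝ f x : Cn n →L[ℝ] Cn n) : Cn n →ₗ[ℝ] Cn n))

/-- Rank of the complex Jacobian of `f` at `x`. -/
def cRank (n : ℕ) (f : Cn n → Cn n) (x : Cn n) : ℕ :=
  Module.finrank ℂ (LinearMap.range ((fderiv ℂ f x : Cn n →L[ℂ] Cn n) : Cn n →ₗ[ℂ] Cn n))

/-- A permutation of the unit ball which is holomorphic. -/
def IsHoloPerm (n : ℕ) (f : Equiv.Perm (BallPt n)) : Prop :=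
  ∃ g : Cn n → Cn n, DifferentiableOn ℂ g (Metric.ball 0 1) ∧
    ∀ z : BallPt n, g (z : Cn n) = (f z : Cn n)

/-- A holomorphic automorphism of the unit ball. -/
def IsBallAut (n : ℕ) (f : Equiv.Perm (BallPt n)) : Prop :=
  IsHoloPerm n f ∧ IsHoloPerm n f.symm

/-- A finite subgroup of `Aut(Bⁿ)`. -/
def IsFiniteBallAutSubgroup (n : ℕ) (Γ : Subgroup (Equiv.Perm (BallPt n))) : Prop :=
  (Γ : Set (Equiv.Perm (BallPt n))).Finite ∧ ∀ f ∈ Γ, IsHoloPerm n f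

/-- A geodesic hyperplane of `Bⁿ`: the image of `{z_n = 0}` by an automorphism. -/
def IsGeodesicHyperplane (n : ℕ) (hn : 0 < n) (H : Set (BallPt n)) : Prop :=
  ∃ g : Equiv.Perm (BallPt n), IsBallAut n g ∧
    H = g '' {z : BallPt n | (z : Cn n) ⟨n - 1, by omega⟩ = 0}

/-- A reflection of `Bⁿ`: a finite-order automorphism whose fixed point set is a
geodesic hyperplane. -/
def IsReflection (n : ℕ) (hn : 0 < n) (f : Equiv.Perm (BallPt n)) : Prop :=
  IsBallAut n f ∧ IsOfFinOrder f ∧ IsGeodesicHyperplane n hn {z : BallPt n | f z = z}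

/-- `Γ_ref`: the subgroup generated by the reflections contained in `Γ`. -/
def reflSubgroup (n : ℕ) (hn : 0 < n) (Γ : Subgroup (Equiv.Perm (BallPt n))) :
    Subgroup (Equiv.Perm (BallPt n)) :=
  Subgroup.closure {f | f ∈ Γ ∧ IsReflection n hn f}

/-- A ball permutation is represented on the ball by the (unitary) linear isometry `U`. -/
def RepresentsOnBall (n : ℕ) (f : Equiv.Perm (BallPt n)) (U : Cn n ≃ₗᵢ[ℂ] Cn n) : Prop :=
  ∀ z : BallPt n, (f z : Cn n) = U (z : Cn n)

/-- Evaluation of a polynomial in `n` variables at a point of `ℂⁿ`. -/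
def evalAt (n : ℕ) (Q : MvPolynomial (Fin n) ℂ) (z : Cn n) : ℂ :=
  MvPolynomial.eval (fun i => z i) Q

/-- `Q` is invariant under the reflection subgroup `Γ_o,ref = h Γ_ref h⁻¹ ⊆ U(n)`. -/
def IsReflInvariant (n : ℕ) (hn : 0 < n) (Γ : Subgroup (Equiv.Perm (BallPt n)))
    (hmap : Equiv.Perm (BallPt n)) (Q : MvPolynomial (Fin n) ℂ) : Prop :=
  ∀ f ∈ reflSubgroup n hn Γ, ∀ U : Cn n ≃ₗᵢ[ℂ] Cn n,
    RepresentsOnBall n (hmap * f * hmap⁻¹) U →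
      ∀ z : Cn n, evalAt n Q (U z) = evalAt n Q z

/-- The data entering the construction of the Chevalley map `P_Γ` associated with a
finite subgroup `Γ ⊆ Aut(Bⁿ)`: an automorphism `h` carrying a common fixed point `x₀`
of `Γ` to `0` (so that `hΓh⁻¹ ⊆ U(n)`), and a basis `P₁,…,Pₙ` of homogeneous
polynomials for the algebra of `Γ_o,ref`-invariant polynomials. -/
structure ChevalleyData (n : ℕ) (hn : 0 < n) (Γ : Subgroup (Equiv.Perm (BallPt n))) where
  hmap : Equiv.Perm (BallPt n)
  hmap_aut : IsBallAut n hmap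
  x0 : BallPt n
  x0_fixed : ∀ f ∈ Γ, f x0 = x0
  hmap_x0 : (hmap x0 : Cn n) = 0
  conj_unitary : ∀ f ∈ Γ, ∃ U : Cn n ≃ₗᵢ[ℂ] Cn n, RepresentsOnBall n (hmap * f * hmap⁻¹) U
  P : Fin n → MvPolynomial (Fin n) ℂ
  deg : Fin n → ℕ
  homog : ∀ i, (P i).IsHomogeneous (deg i)
  invariant : ∀ i, IsReflInvariant n hn Γ hmap (P i)
  generates : ∀ Q : MvPolynomial (Fin n) ℂ, IsReflInvariant n hn Γ hmap Q →
    ∃ R : MvPolynomial (Fin n) ℂ, Q = MvPolynomial.aeval P R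

/-- The proper holomorphic map `P_Γ = (P₁,…,Pₙ) ∘ h : Bⁿ → ℂⁿ` (extended by `0`
outside the ball). -/
def ChevalleyData.map {n : ℕ} {hn : 0 < n} {Γ : Subgroup (Equiv.Perm (BallPt n))}
    (C : ChevalleyData n hn Γ) : Cn n → Cn n := fun z =>
  letI : Decidable (z ∈ Metric.ball (0 : Cn n) 1) := Classical.dec _
  if hz : z ∈ Metric.ball (0 : Cn n) 1 then
    (EuclideanSpace.equiv (Fin n) ℂ).symm fun i =>
      evalAt n (C.P i) ((C.hmap ⟨z, hz⟩ : BallPt n) : Cn n)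
  else 0

/-- The domain `B^n_Γ = P_Γ(Bⁿ)`. -/
def ChevalleyData.image {n : ℕ} {hn : 0 < n} {Γ : Subgroup (Equiv.Perm (BallPt n))}
    (C : ChevalleyData n hn Γ) : Set (Cn n) :=
  C.map '' Metric.ball 0 1

/-- A biholomorphism from `A` onto `B`. -/
def IsBiholoOn (n : ℕ) (f : Cn n → Cn n) (A B : Set (Cn n)) : Prop :=
  DifferentiableOn ℂ f A ∧ BijOn f A B ∧
    ∃ g : Cn n → Cn n, DifferentiableOn ℂ g B ∧ BijOn g B A ∧ InvOn g f A B

/-- A complex-analytic subvariety `S` of (an open set) `D`: locally the common zero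
set of finitely many holomorphic functions. -/
def IsAnalyticSubvariety {E : Type*} [NormedAddCommGroup E] [NormedSpace ℂ E]
    (D S : Set E) : Prop :=
  S ⊆ D ∧ ∀ x ∈ D, ∃ U : Set E, IsOpen U ∧ x ∈ U ∧ U ⊆ D ∧
    ∃ (N : ℕ) (f : Fin N → E → ℂ), (∀ i, DifferentiableOn ℂ (f i) U) ∧
      S ∩ U = {z ∈ U | ∀ i, f i z = 0}

/-- Two points `y, y'` of `Bⁿ` are `F`-related: they lie in a common set
`φ^(p)(F⁻¹(w))`, `w ∈ Ω`. -/
def FRelated (n k : ℕ) (hk : k ≤ n) (p : Fin k → ℕ) (F : Cn n → Cn n)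
    (E Ω : Set (Cn n)) (y y' : Cn n) : Prop :=
  ∃ w ∈ Ω, y ∈ phiMap n k hk p '' (E ∩ F ⁻¹' {w}) ∧
    y' ∈ phiMap n k hk p '' (E ∩ F ⁻¹' {w})

/-- The correspondence with graph `V ⊆ D × D'` splits at `z₀ ∈ D`. -/
def SplitsAt (n : ℕ) (D D' : Set (Cn n)) (V : Set (Cn n × Cn n)) (z0 : Cn n) : Prop :=
  ∃ U : Set (Cn n), IsOpen U ∧ z0 ∈ U ∧ ∃ (q : ℕ) (g : Fin q → Cn n → Cn n),
    (∀ i, DifferentiableOn ℂ (g i) (U ∩ D) ∧ MapsTo (g i) (U ∩ D) D') ∧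
    ∀ z ∈ U ∩ D, ∀ w ∈ D', ((z, w) ∈ V ↔ ∃ i, g i z = w)

/-- `D` is a bounded domain with smooth boundary: near each boundary point there is a
smooth local defining function with nonvanishing differential. -/
def HasSmoothBoundary (n : ℕ) (D : Set (Cn n)) : Prop :=
  ∀ x ∈ frontier D, ∃ (V : Set (Cn n)) (ρ : Cn n → ℝ), IsOpen V ∧ x ∈ V ∧
    ContDiff ℝ (⊤ : ℕ∞) ρ ∧ (∀ y ∈ V, fderiv ℝ ρ y ≠ 0) ∧
    D ∩ V = {y ∈ V | ρ y < 0} ∧ frontier D ∩ V = {y ∈ V | ρ y = 0}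

end

noncomputable instance (n : ℕ) : MeasurableSpace (Cn n) := borel _
instance (n : ℕ) : BorelSpace (Cn n) := ⟨rfl⟩

open scoped NNReal ENNReal in
/-- A map that is sufficiently close to a non-injective linear map `A` shrinks `m`-dimensional
measure by an arbitrarily small factor. The closeness `δ` depends only on `A` and `ε`; the
non-injectivity is assumed after `δ` so that `δ` is defined for every `A`. -/
lemma exists_hausdorff_image_le {m : ℕ} {F : Type*} [NormedAddCommGroup F] [NormedSpace ℝ F]
    [MeasurableSpace F] [BorelSpace F] (A : (Fin m → ℝ) →L[ℝ] F)
    (ε : ℝ≥0) (hε : 0 < ε) :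
    ∃ δ : ℝ≥0, 0 < δ ∧ ((∃ v, v ≠ 0 ∧ A v = 0) →
      ∀ (f : (Fin m → ℝ) → F) (t : Set (Fin m → ℝ)),
        ApproximatesLinearOn f A t δ → μH[(m : ℝ)] (f '' t) ≤ ε * volume t) := by
  by_cases hA : ∃ v, v ≠ 0 ∧ A v = 0
  swap
  · exact ⟨1, one_pos, fun h => absurd h hA⟩
  obtain ⟨v, hv, hAv⟩ := hA
  obtain ⟨ℓ, hℓ⟩ := SeparatingDual.exists_eq_one (R := ℝ) hv
  set C : ℝ≥0 := ‖A‖₊ + 1 + ‖ℓ‖₊ * ‖v‖₊ with hC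
  have hCpos : 0 < C := by positivity
  set δ : ℝ≥0 := min 1 (ε / C ^ m) with hδ
  have hδpos : 0 < δ := lt_min one_pos (by positivity)
  have hδ1 : δ ≤ 1 := min_le_left _ _
  have hδε : C ^ m * δ ≤ ε := by
    calc C ^ m * δ ≤ C ^ m * (ε / C ^ m) := by gcongr; exact min_le_right _ _
      _ = ε := by field_simp
  refine ⟨δ, hδpos, fun _ f t hf => ?_⟩
  -- `T` contracts the direction `v` by the factor `δ` and fixes the hyperplane `ker ℓ`.
  set T : (Fin m → ℝ) →ₗ[ℝ] (Fin m → ℝ) :=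
    LinearMap.transvection (ℓ : (Fin m → ℝ) →ₗ[ℝ] ℝ) (-(1 - (δ : ℝ)) • v) with hT
  have hTdet : LinearMap.det T = δ := by
    rw [hT, LinearMap.transvection.det]; simp [hℓ]
  have hTapp : ∀ z, T z = z - ((1 - (δ : ℝ)) * ℓ z) • v := fun z => by
    simp only [hT, LinearMap.transvection, LinearMap.coe_mk, AddHom.coe_mk,
      ContinuousLinearMap.coe_coe]
    module
  have hℓT : ∀ z, ℓ (T z) = δ * ℓ z := fun z => by
    rw [hTapp]; simp [hℓ]; ring
  -- `S` is the inverse of `T`.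
  set S : (Fin m → ℝ) → (Fin m → ℝ) := fun w => w + (((δ : ℝ)⁻¹ - 1) * ℓ w) • v with hS
  have hδ0 : (δ : ℝ) ≠ 0 := by exact_mod_cast hδpos.ne'
  have hST : ∀ z, S (T z) = z := fun z => by
    have e : ((δ : ℝ)⁻¹ - 1) * (δ * ℓ z) = (1 - (δ : ℝ)) * ℓ z := by field_simp
    simp only [hS, hℓT, e]
    rw [hTapp]; simp
  have hAT : ∀ z, A z = A (T z) := fun z => by rw [hTapp]; simp [hAv]
  have hδz : ∀ z, δ * ‖z‖ ≤ (1 + ‖ℓ‖ * ‖v‖) * ‖T z‖ := fun z => by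
    have e : (δ : ℝ) • z = (δ : ℝ) • T z + ((1 - (δ : ℝ)) * ℓ (T z)) • v := by
      rw [hℓT, hTapp]; module
    have h0 : (0 : ℝ) ≤ δ := δ.2
    have h1 : (δ : ℝ) ≤ 1 := by exact_mod_cast hδ1
    calc δ * ‖z‖ = ‖(δ : ℝ) • z‖ := by rw [norm_smul, Real.norm_of_nonneg h0]
      _ ≤ δ * ‖T z‖ + (1 - δ) * ‖ℓ (T z)‖ * ‖v‖ := by
        rw [e]
        refine (norm_add_le _ _).trans ?_
        rw [norm_smul, norm_smul, norm_mul, Real.norm_of_nonneg h0,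
          Real.norm_of_nonneg (sub_nonneg.2 h1)]
      _ ≤ 1 * ‖T z‖ + 1 * (‖ℓ‖ * ‖T z‖) * ‖v‖ := by
        gcongr
        · linarith
        · exact ℓ.le_opNorm _
      _ = _ := by ring
  have hlip : LipschitzOnWith C (f ∘ S) (T '' t) := by
    refine LipschitzOnWith.of_dist_le_mul ?_
    rintro _ ⟨x, hx, rfl⟩ _ ⟨y, hy, rfl⟩
    simp only [Function.comp, hST, dist_eq_norm, ← map_sub]
    have h1 := hf x hx y hy
    calc ‖f x - f y‖ ≤ ‖f x - f y - A (x - y)‖ + ‖A (x - y)‖ := by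
            simpa using norm_add_le (f x - f y - A (x - y)) (A (x - y))
      _ ≤ (1 + ‖ℓ‖ * ‖v‖) * ‖T (x - y)‖ + ‖A‖ * ‖T (x - y)‖ := by
        refine add_le_add (h1.trans (hδz _)) ?_
        rw [hAT]; exact A.le_opNorm _
      _ = C * ‖T (x - y)‖ := by simp [hC]; ring
  have himg : f '' t = (f ∘ S) '' (T '' t) := by
    rw [← image_comp]
    exact image_congr fun x _ => by simp [hST]
  have hvol : (μH[(m : ℝ)] : Measure (Fin m → ℝ)) = volume := by
    simpa using hausdorffMeasure_pi_real (ι := Fin m)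
  calc μH[(m : ℝ)] (f '' t) ≤ (C : ℝ≥0∞) ^ (m : ℝ) * μH[(m : ℝ)] (T '' t) := by
        rw [himg]; exact hlip.hausdorffMeasure_image_le (Nat.cast_nonneg m)
    _ = ((C ^ m * δ : ℝ≥0) : ℝ≥0∞) * volume t := by
      rw [hvol, Measure.addHaar_image_linearMap, hTdet, ENNReal.rpow_natCast, ← mul_assoc]
      simp
    _ ≤ ε * volume t := by gcongr

open scoped NNReal ENNReal in
/-- Sard's theorem for maps from `ℝ^m` to a space of arbitrary dimension: the image of the set where
the differential is not injective is `μH[m]`-null. -/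
lemma hausdorff_image_eq_zero {m : ℕ} {F : Type*} [NormedAddCommGroup F] [NormedSpace ℝ F]
    [MeasurableSpace F] [BorelSpace F] [SecondCountableTopology F]
    (f : (Fin m → ℝ) → F) (f' : (Fin m → ℝ) → (Fin m → ℝ) →L[ℝ] F) (s : Set (Fin m → ℝ))
    (hf : ∀ x ∈ s, HasFDerivWithinAt f (f' x) s x)
    (hker : ∀ x ∈ s, ∃ v, v ≠ 0 ∧ f' x v = 0) : μH[(m : ℝ)] (f '' s) = 0 := by
  wlog hs : Bornology.IsBounded s generalizing s
  · have hu : f '' s = ⋃ k : ℕ, f '' (s ∩ ball 0 k) := by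
      rw [← image_iUnion, ← inter_iUnion, iUnion_ball_nat, inter_univ]
    rw [hu, measure_iUnion_null_iff]
    exact fun k => this _ (fun x hx => (hf x hx.1).mono inter_subset_left)
      (fun x hx => hker x hx.1) (isBounded_ball.subset inter_subset_right)
  rcases s.eq_empty_or_nonempty with rfl | hne
  · simp
  -- The set `s` need not be measurable; its thickening is a measurable set of finite volume in which
  -- the volumes of the pieces add up.
  have hfin : volume (cthickening 1 s) ≠ ∞ := hs.cthickening.measure_lt_top.ne
  have key : ∀ ε : ℝ≥0, 0 < ε → μH[(m : ℝ)] (f '' s) ≤ ε * volume (cthickening 1 s) := by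
    intro ε hε
    choose δ hδpos hδ using fun A : (Fin m → ℝ) →L[ℝ] F => exists_hausdorff_image_le A ε hε
    obtain ⟨t, A, hdisj, hmeas, hcov, happ, hA⟩ :=
      exists_partition_approximatesLinearOn_of_hasFDerivWithinAt f s f' hf δ
        fun A => (hδpos A).ne'
    calc μH[(m : ℝ)] (f '' s) ≤ μH[(m : ℝ)] (⋃ k, f '' (s ∩ t k)) := by
          rw [← image_iUnion, ← inter_iUnion]
          exact measure_mono (image_mono (subset_inter Subset.rfl hcov))
      _ ≤ ∑' k, μH[(m : ℝ)] (f '' (s ∩ t k)) := measure_iUnion_le _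
      _ ≤ ∑' k, ε * volume (cthickening 1 s ∩ t k) := by
        refine ENNReal.tsum_le_tsum fun k => ?_
        obtain ⟨y, hy, hyA⟩ := hA hne k
        refine (hδ (A k) (hyA ▸ hker y hy) f _ (happ k)).trans ?_
        gcongr
        exact self_subset_cthickening s
      _ = ε * volume (cthickening 1 s ∩ ⋃ k, t k) := by
        rw [ENNReal.tsum_mul_left, inter_iUnion, measure_iUnion
          (fun i j hij => (hdisj hij).mono inter_subset_right inter_subset_right)
          (fun k => isClosed_cthickening.measurableSet.inter (hmeas k))]
      _ ≤ ε * volume (cthickening 1 s) := by gcongr; exact inter_subset_left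
  by_contra hpos
  obtain ⟨ε, hε, hlt⟩ := ENNReal.exists_nnreal_pos_mul_lt hfin hpos
  exact absurd (key ε hε) (not_le.2 hlt)

/-- Near a regular point, a level set of a `C¹` function is covered by the image of the
differentiability points of a map defined on `ℝ^m`. -/
lemma exists_levelSet_param {m : ℕ} {E : Type*} [NormedAddCommGroup E] [NormedSpace ℝ E]
    [FiniteDimensional ℝ E] (hE : Module.finrank ℝ E = m + 1) (ρ : E → ℝ) (x : E)
    (hρ : ContDiffAt ℝ 1 ρ x) (hx : fderiv ℝ ρ x ≠ 0) :
    ∃ φ : (Fin m → ℝ) → E, ∀ᶠ y in 𝓝 x, ρ y = ρ x → ∃ w, DifferentiableAt ℝ φ w ∧ φ w = y := by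
  have : CompleteSpace E := FiniteDimensional.complete ℝ E
  have hsurj : (fderiv ℝ ρ x).range = ⊤ :=
    LinearMap.range_eq_top.2 
      (LinearMap.surjective fun h => hx (by ext z; exact DFunLike.congr_fun h z))
  have hker : Module.finrank ℝ (fderiv ℝ ρ x).ker = m := by
    have := (fderiv ℝ ρ x : E →ₗ[ℝ] ℝ).finrank_range_add_finrank_ker
    rw [hsurj, finrank_top, Module.finrank_self, hE] at this
    omega
  let d := (hρ.hasStrictFDerivAt one_ne_zero).implicitFunctionDataOfComplemented ρ _ hsurj
    (Submodule.ClosedComplemented.of_finiteDimensional _)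
  let κ : (fderiv ℝ ρ x).ker ≃L[ℝ] (Fin m → ℝ) :=
    ContinuousLinearEquiv.ofFinrankEq (by simp [hker])
  have hr : ContDiff ℝ 1 d.rightFun :=
    d.rightDeriv.contDiff.comp (contDiff_id.sub contDiff_const)
  have hcd : ContDiffAt ℝ 1 d.implicitFunction.uncurry (d.prodFun d.pt) :=
    d.contDiffAt_implicitFunction hρ hr.contDiffAt one_ne_zero
  have hev : ∀ᶠ p in 𝓝 (d.prodFun d.pt), DifferentiableAt ℝ d.implicitFunction.uncurry p :=
    (hcd.eventually (by simp)).mono fun p hp => hp.differentiableAt one_ne_zero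
  have hcont : ContinuousAt d.prodFun x := hρ.continuousAt.prodMk hr.continuous.continuousAt
  refine ⟨fun w => d.implicitFunction.uncurry (ρ x, κ.symm w), ?_⟩
  filter_upwards [d.implicitFunction_apply_image, hcont.eventually hev] with y hy1 hy2 hy3
  refine ⟨κ (d.rightFun y), ?_, ?_⟩
  · have : d.prodFun y = (ρ x, κ.symm (κ (d.rightFun y))) := by
      rw [← hy3]; simp [d]
    rw [this] at hy2
    exact hy2.comp (κ (d.rightFun y)) ((differentiableAt_const _).prodMk κ.symm.differentiableAt)
  · simp only [← hy3, ContinuousLinearEquiv.symm_apply_apply]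
    exact hy1

/-- On `closure D` the real differential of the `C¹` extension is complex linear, as a limit of
complex linear maps. -/
lemma fderiv_smul_I_of_mem_closure {n : ℕ} {D U : Set (Cn n)} {F G : Cn n → Cn n}
    (hD : IsOpen D) (hF : DifferentiableOn ℂ F D) (hU : IsOpen U) (hUD : closure D ⊆ U)
    (hG : ContDiffOn ℝ 1 G U) (hGF : EqOn G F D) {x : Cn n} (hx : x ∈ closure D) (v : Cn n) :
    fderiv ℝ G x (Complex.I • v) = Complex.I • fderiv ℝ G x v := by
  have hc : ContinuousOn (fderiv ℝ G) U := hG.continuousOn_fderiv_of_isOpen hU le_rfl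
  have hc1 : ∀ w, ContinuousWithinAt (fun y => fderiv ℝ G y w) D x := fun w =>
    ((hc x (hUD hx)).mono (subset_closure.trans hUD)).clm_apply continuousWithinAt_const
  have hne : (𝓝[D] x).NeBot := mem_closure_iff_nhdsWithin_neBot.1 hx
  refine tendsto_nhds_unique_of_eventuallyEq (hc1 (Complex.I • v))
    ((hc1 v).const_smul Complex.I) ?_
  filter_upwards [self_mem_nhdsWithin] with y hy
  have hFy : HasFDerivAt F (fderiv ℂ F y) y := (hF.differentiableAt (hD.mem_nhds hy)).hasFDerivAt
  have hGy : HasFDerivAt G ((fderiv ℂ F y).restrictScalars ℝ) y :=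
    (hFy.restrictScalars ℝ).congr_of_eventuallyEq (hGF.eventuallyEq_of_mem (hD.mem_nhds hy))
  simp [hGy.fderiv]

/-- A singular `ℝ`-linear endomorphism of `ℂⁿ` commuting with `i` has real rank at most `2n - 2`, so
its composition with a linear map from `ℝ^(2n - 1)` is not injective. -/
lemma exists_ker_comp {n m : ℕ} (hm : m + 1 = 2 * n) (L : Cn n →L[ℝ] Cn n)
    (hI : ∀ v, L (Complex.I • v) = Complex.I • L v)
    (hdet : LinearMap.det (L : Cn n →ₗ[ℝ] Cn n) = 0) (B : (Fin m → ℝ) →L[ℝ] Cn n) :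
    ∃ v, v ≠ 0 ∧ (L.comp B) v = 0 := by
  let LC : Cn n →ₗ[ℂ] Cn n :=
    { toFun := L
      map_add' := map_add L
      map_smul' := fun c v => by
        have h : ∀ w : Cn n, c • w = c.re • w + c.im • Complex.I • w := fun w => by
          conv_lhs => rw [← Complex.re_add_im c]
          rw [add_smul, mul_smul, Complex.coe_smul, Complex.coe_smul]
        rw [RingHom.id_apply, h, h, map_add, map_smul, map_smul, hI] }
  have hrange : Module.finrank ℝ (L : Cn n →ₗ[ℝ] Cn n).range
      = 2 * Module.finrank ℂ LC.range :=
    finrank_real_of_complex LC.range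
  have hlt : Module.finrank ℝ (L : Cn n →ₗ[ℝ] Cn n).range < 2 * n := by
    have h1 := LinearMap.finrank_range_add_finrank_ker (L : Cn n →ₗ[ℝ] Cn n)
    have h2 : Module.finrank ℝ (Cn n) = 2 * n := by
      rw [finrank_real_of_complex, finrank_euclideanSpace_fin]
    have h3 := LinearMap.bot_lt_ker_of_det_eq_zero hdet
    have h4 := Submodule.one_le_finrank_iff.2 h3.ne'
    omega
  by_contra! hcon
  have hinj : Function.Injective
      ((L : Cn n →ₗ[ℝ] Cn n).rangeRestrict ∘ₗ (B : (Fin m → ℝ) →ₗ[ℝ] Cn n)) := by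
    rw [← LinearMap.ker_eq_bot, LinearMap.ker_eq_bot']
    intro v hv
    by_contra hv0
    exact hcon v hv0 (congrArg Subtype.val hv)
  have := LinearMap.finrank_le_finrank_of_injective hinj
  rw [Module.finrank_fin_fun] at this
  -- The rank of `L` is even and `< 2n`, whereas `B` has a domain of dimension `2n - 1`.
  omega

theorem boundary_critical_image_measure_zero
    (n : ℕ) (hn : 0 < n)
    (D D' : Set (Cn n)) (hD : IsOpen D) (hDc : IsConnected D)
    (hDb : Bornology.IsBounded D) (hDsm : HasSmoothBoundary n D)
    (hD' : IsOpen D') (hD'c : IsConnected D')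
    (F : Cn n → Cn n) (hFholo : DifferentiableOn ℂ F D) (hFmaps : MapsTo F D D')
    (hFproper : ProperOn n F D D')
    (U : Set (Cn n)) (G : Cn n → Cn n) (hU : IsOpen U) (hUD : closure D ⊆ U)
    (hG : ContDiffOn ℝ 1 G U) (hGF : EqOn G F D) :
    μH[(2 * n - 1 : ℝ)] (G '' {x ∈ frontier D | rDet n G x = 0}) = 0 := by
  obtain ⟨m, hm⟩ : ∃ m, m + 1 = 2 * n := ⟨2 * n - 1, by omega⟩
  have hmR : (2 * n - 1 : ℝ) = (m : ℝ) := by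
    have : ((m + 1 : ℕ) : ℝ) = ((2 * n : ℕ) : ℝ) := by rw [hm]
    push_cast at this
    linarith
  rw [hmR]
  have hfin : Module.finrank ℝ (Cn n) = m + 1 := by
    rw [finrank_real_of_complex, finrank_euclideanSpace_fin, hm]
  set Z := {x ∈ frontier D | rDet n G x = 0} with hZ
  have hloc : ∀ x ∈ Z, ∃ N ∈ 𝓝[Z] x, μH[(m : ℝ)] (G '' (Z ∩ N)) = 0 := by
    intro x hx
    obtain ⟨V, ρ, hV, hxV, hρ, hdρ, -, hfr⟩ := hDsm x hx.1
    obtain ⟨φ, hφ⟩ := exists_levelSet_param hfin ρ x (hρ.of_le (by simp)).contDiffAt (hdρ x hxV)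
    have hzero : ∀ y ∈ frontier D ∩ V, ρ y = 0 := fun y hy => (hfr ▸ hy).2
    refine ⟨_, mem_nhdsWithin_of_mem_nhds (inter_mem hφ (hV.mem_nhds hxV)), ?_⟩
    set s := {w | DifferentiableAt ℝ φ w ∧ φ w ∈ Z} with hs
    have hnull : μH[(m : ℝ)] ((G ∘ φ) '' s) = 0 := by
      refine hausdorff_image_eq_zero (G ∘ φ)
        (fun w => (fderiv ℝ G (φ w)).comp (fderiv ℝ φ w)) s ?_ ?_
      · rintro w ⟨hw, hwZ⟩
        have hGd : DifferentiableAt ℝ G (φ w) :=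
          (hG.differentiableOn one_ne_zero).differentiableAt
            (hU.mem_nhds (hUD (frontier_subset_closure hwZ.1)))
        exact (hGd.hasFDerivAt.comp w hw.hasFDerivAt).hasFDerivWithinAt
      · rintro w ⟨hw, hwZ⟩
        exact exists_ker_comp hm _ (fderiv_smul_I_of_mem_closure hD hFholo hU hUD hG hGF
          (frontier_subset_closure hwZ.1)) hwZ.2 _
    refine measure_mono_null ?_ hnull
    rintro _ ⟨y, ⟨hyZ, hyφ, hyV⟩, rfl⟩
    obtain ⟨w, hw, rfl⟩ := hyφ ((hzero y ⟨hyZ.1, hyV⟩).trans (hzero x ⟨hx.1, hxV⟩).symm)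
    exact ⟨w, ⟨hw, hyZ⟩, rfl⟩
  choose! N hN hN0 using hloc
  obtain ⟨t, htZ, htc, hcov⟩ := TopologicalSpace.countable_cover_nhdsWithin hN
  refine measure_mono_null ?_ ((measure_biUnion_null_iff htc).2 fun x hx => hN0 x (htZ hx))
  rintro _ ⟨y, hy, rfl⟩
  obtain ⟨x, hxt, hyx⟩ := mem_iUnion₂.1 (hcov hy)
  exact mem_iUnion₂.2 ⟨x, hxt, y, ⟨hy, hyx⟩, rfl⟩
end

section
/- Let F : E^n_(p) → Ω ⊆ ℂ^n be a proper holomorphic map of multiplicity m > 1 admitting a C¹ extension to the closure of E^n_(p). Then there exist m sequences {x^(1)_k},…,{x^(m)_k} in E^n_(p) with F(x^(1)_k) = F(x^(2)_k) = … = F(x^(m)_k) for every k, such that: (i) they converge to m distinct points x^(1)_0,…,x^(m)_0 ∈ ∂E^n_(p); (ii) there are pairwise disjoint connected open sets U^(1),…,U^(m) ⊆ ℂ^n with x^(i)_0 ∈ U^(i) for each i, such that the restrictions F|_{U^(i) ∩ E^n_(p)} are biholomorphisms onto one and the same open set W = F(U^(i) ∩ E^n_(p)) ⊆ Ω, and the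 restrictions φ^(p)|_{U^(i) ∩ E^n_(p)} are biholomorphisms onto their images V^(i) = φ^(p)(U^(i) ∩ E^n_(p)) ⊆ B^n. -/
/-!
Let `g` be the `C¹` extension of `F` to a neighbourhood of the closure of `E = E^n_(p)`.
Properness gives `g(∂E) ∩ Ω = ∅`, and `∂Ω ⊆ g(∂E)`.

*A good boundary value.* Call `c ∈ ∂E` bad if `dg(c)` is singular or if some coordinate of `c`
vanishes. Since `dg` is complex linear on the closure of `E`, a singular `dg(c)` has real corank at
least two. With `retr` the retraction of `ℂⁿ \ {0}` onto `{rho = 1}` along weighted dilations, the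
map `G z = g (retr z) + (rho z - 1) v` is therefore critical wherever `dg (retr z)` is singular. By
Sard's theorem in equal dimensions, and because coordinate hyperplanes are null, the points
`g c + t v` with `c` bad and `t ≥ 0` form a Lebesgue null set. Choose `ω ∈ Ω` outside it. The ray
`ω - t v` leaves the bounded set `Ω` at a point `w₀ ∈ ∂Ω` with no bad preimage
(`exists_good_boundary_point`).

*The sheets.* Over `w₀` the extension has finitely many preimages, all on `∂E`, with disjoint
neighbourhoods `N y` on which `g` and `φ^(p)` are injective local diffeomorphisms
(`exists_nhds_of_fibre`). Let `W` be the image of a small half ball `ball x₁ δ ∩ E`, which is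
connected because `E` is convex. For each preimage `y` the sheet `A y = N y ∩ E ∩ F⁻¹(W)` is empty
or maps biholomorphically onto `W`, as its image is open and closed in `W`. Points of `W` are
regular values, so exactly `m` sheets are nonempty. The open sets sought are the sheets `A y`
enlarged by a small ball around `y`, and the sequences are the preimages in the sheets of a
sequence in `W` converging to `w₀`.
-/

open Metric Set Filter Topology MeasureTheory

/-! ### Linear algebra and local inverses -/

/-- If `L` is complex linear and singular, a nonzero complex functional `f` vanishes on its range.
Then `f` maps the range of `L ∘ R + a ⊗ v` into the real line spanned by `f v`, so the sum is not
surjective. -/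
lemma det_eq_zero_of_rank_one_perturbation {n : ℕ} (L R : Cn n →L[ℝ] Cn n)
    (hL : ∀ u, L (Complex.I • u) = Complex.I • L u) (hdet : L.det = 0)
    (a : Cn n →L[ℝ] ℝ) (v : Cn n) :
    (L.comp R + a.smulRight v).det = 0 := by
  by_contra hne
  have hsurj : Function.Surjective (L.comp R + a.smulRight v) := by
    have h1 : IsUnit (((L.comp R + a.smulRight v : Cn n →L[ℝ] Cn n)) : Cn n →ₗ[ℝ] Cn n) :=
      (LinearMap.isUnit_iff_isUnit_det _).2 (isUnit_iff_ne_zero.2 hne)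
    exact ((Module.End.isUnit_iff _).1 h1).2
  let A : Cn n →ₗ[ℂ] Cn n :=
    { toFun := L
      map_add' := L.map_add
      map_smul' := fun c u => by
        have hc : c • u = c.re • u + c.im • (Complex.I • u) := by
          conv_lhs => rw [← Complex.re_add_im c, add_smul, mul_smul]
          simp
        have hc' : c • L u = c.re • L u + c.im • (Complex.I • L u) := by
          conv_lhs => rw [← Complex.re_add_im c, add_smul, mul_smul]
          simp
        rw [hc, map_add, map_smul, map_smul, hL]
        exact hc'.symm }
  have hA : LinearMap.range A < ⊤ := by
    rw [lt_top_iff_ne_top]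
    intro htop
    have hs : Function.Surjective A := LinearMap.range_eq_top.1 htop
    have hs' : Function.Surjective (L : Cn n →ₗ[ℝ] Cn n) := hs
    have hu : IsUnit (L : Cn n →ₗ[ℝ] Cn n) :=
      (Module.End.isUnit_iff _).2 ⟨LinearMap.injective_iff_surjective.2 hs', hs'⟩
    have := (LinearMap.isUnit_iff_isUnit_det _).1 hu
    exact this.ne_zero hdet
  obtain ⟨f, hf0, hf⟩ := Submodule.exists_le_ker_of_lt_top _ hA
  have hfL : ∀ u, f (L u) = 0 := fun u => hf ⟨u, rfl⟩
  have hfs : Function.Surjective f := LinearMap.surjective hf0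
  have key : ∀ c : ℂ, ∃ t : ℝ, c = t * f v := by
    intro c
    obtain ⟨y, rfl⟩ := hfs c
    obtain ⟨u, rfl⟩ := hsurj y
    refine ⟨a u, ?_⟩
    have : (a u : ℝ) • v = (a u : ℂ) • v := by simp
    simp only [_root_.add_apply, ContinuousLinearMap.comp_apply, map_add, hfL,
      ContinuousLinearMap.smulRight_apply, zero_add]
    rw [this, map_smul, smul_eq_mul]
  obtain ⟨s, hs⟩ := key 1
  obtain ⟨t, ht⟩ := key Complex.I
  have h1 : (s : ℂ) * Complex.I = t := by
    calc (s : ℂ) * Complex.I = t * (s * f v) := by rw [ht]; ring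
      _ = t := by rw [← hs, mul_one]
  have hs0 : s = 0 := by simpa using congrArg Complex.im h1
  simp [hs0] at hs

/-- A real-`C¹` map with invertible derivative at `z` maps neighbourhoods onto neighbourhoods. -/
lemma map_nhds_eq_of_det_ne_zero {n : ℕ} {f : Cn n → Cn n} {z : Cn n}
    (hf : ContDiffAt ℝ 1 f z) (hd : (fderiv ℝ f z).det ≠ 0) : map f (𝓝 z) = 𝓝 (f z) := by
  have h := hf.hasStrictFDerivAt (by simp)
  exact HasStrictFDerivAt.map_nhds_eq_of_equiv
    (f' := ContinuousLinearMap.toContinuousLinearEquivOfDetNeZero _ hd) h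

lemma exists_injOn_of_det_ne_zero {n : ℕ} {f : Cn n → Cn n} {z : Cn n}
    (hf : ContDiffAt ℝ 1 f z) (hd : (fderiv ℝ f z).det ≠ 0) :
    ∃ N, IsOpen N ∧ z ∈ N ∧ InjOn f N := by
  have h := hf.hasStrictFDerivAt (by simp)
  have h' : HasStrictFDerivAt f
    ((ContinuousLinearMap.toContinuousLinearEquivOfDetNeZero _ hd : Cn n ≃L[ℝ] Cn n) :
      Cn n →L[ℝ] Cn n) z := h
  refine ⟨(h'.toOpenPartialHomeomorph f).source, (h'.toOpenPartialHomeomorph f).open_source,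
    h'.mem_toOpenPartialHomeomorph_source, ?_⟩
  have := (h'.toOpenPartialHomeomorph f).injOn
  simpa using this

lemma isOpen_image_of_det_ne_zero {n : ℕ} {f : Cn n → Cn n} {A : Set (Cn n)} (hA : IsOpen A)
    (hf : ∀ z ∈ A, ContDiffAt ℝ 1 f z) (hd : ∀ z ∈ A, (fderiv ℝ f z).det ≠ 0) :
    IsOpen (f '' A) := by
  rw [isOpen_iff_mem_nhds]
  rintro _ ⟨z, hz, rfl⟩
  rw [← map_nhds_eq_of_det_ne_zero (hf z hz) (hd z hz)]
  exact image_mem_map (hA.mem_nhds hz)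

lemma fderiv_real_eq {n : ℕ} {f : Cn n → Cn n} {z : Cn n} (hf : DifferentiableAt ℂ f z) :
    fderiv ℝ f z = (fderiv ℂ f z).restrictScalars ℝ :=
  (hf.hasFDerivAt.restrictScalars ℝ).fderiv

lemma injective_of_det_ne_zero {n : ℕ} {L : Cn n →L[ℝ] Cn n} (h : L.det ≠ 0) :
    Function.Injective L :=
  ((Module.End.isUnit_iff _).1
    ((LinearMap.isUnit_iff_isUnit_det (L : Cn n →ₗ[ℝ] Cn n)).2 (isUnit_iff_ne_zero.2 h))).1

lemma det_ne_zero_of_injective {n : ℕ} {L : Cn n →L[ℝ] Cn n} (h : Function.Injective L) :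
    L.det ≠ 0 := by
  have hi : Function.Injective (L : Cn n →ₗ[ℝ] Cn n) := h
  exact ((LinearMap.isUnit_iff_isUnit_det (L : Cn n →ₗ[ℝ] Cn n)).1
    ((Module.End.isUnit_iff _).2 ⟨hi, LinearMap.injective_iff_surjective.1 hi⟩)).ne_zero

/-- An injective holomorphic map with everywhere invertible derivative is a biholomorphism onto
its image. -/
lemma isBiholoOn_image {n : ℕ} {f : Cn n → Cn n} {A : Set (Cn n)} (hA : IsOpen A)
    (hf : ∀ z ∈ A, ContDiffAt ℝ 1 f z) (hd : ∀ z ∈ A, (fderiv ℝ f z).det ≠ 0)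
    (hol : DifferentiableOn ℂ f A) (hinj : InjOn f A) : IsBiholoOn n f A (f '' A) := by
  have hInv : InvOn (Function.invFunOn f A) f A (f '' A) :=
    ⟨hinj.leftInvOn_invFunOn, fun w hw => Function.invFunOn_eq hw⟩
  have hbij : BijOn f A (f '' A) := hinj.bijOn_image
  have hopen := isOpen_image_of_det_ne_zero hA hf hd
  have hmaps : MapsTo (Function.invFunOn f A) (f '' A) A :=
    fun w hw => Function.invFunOn_mem hw
  refine ⟨hol, hbij, Function.invFunOn f A, ?_,
    hInv.symm.bijOn hmaps (mapsTo_image f A), hInv⟩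
  rintro _ ⟨z, hz, rfl⟩
  have hgz : Function.invFunOn f A (f z) = z := hInv.1 hz
  have hcont : ContinuousAt (Function.invFunOn f A) (f z) := by
    intro N hN
    rw [hgz] at hN
    rw [mem_map, ← map_nhds_eq_of_det_ne_zero (hf z hz) (hd z hz)]
    filter_upwards [image_mem_map (inter_mem hN (hA.mem_nhds hz))]
    rintro _ ⟨y, ⟨hyN, hyA⟩, rfl⟩
    simpa only [mem_preimage, hInv.1 hyA] using hyN
  have hdiff : DifferentiableAt ℂ f z := (hol z hz).differentiableAt (hA.mem_nhds hz)
  have hi : Function.Injective (fderiv ℂ f z) := by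
    have := injective_of_det_ne_zero (hd z hz)
    rwa [fderiv_real_eq hdiff] at this
  let e : Cn n ≃L[ℂ] Cn n :=
    (LinearEquiv.ofInjectiveEndo (fderiv ℂ f z : Cn n →ₗ[ℂ] Cn n) hi).toContinuousLinearEquiv
  have he : (e : Cn n →L[ℂ] Cn n) = fderiv ℂ f z := by
    ext1 u
    rfl
  have hd' : HasFDerivAt f (e : Cn n →L[ℂ] Cn n) (Function.invFunOn f A (f z)) := by
    rw [he, hgz]
    exact hdiff.hasFDerivAt
  refine (hd'.of_local_left_inverse hcont ?_).differentiableAt.differentiableWithinAt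
  filter_upwards [hopen.mem_nhds (mem_image_of_mem f hz)] with w hw using hInv.2 hw

/-! ### The defining function and weighted dilations -/

/-- The exponent of the `j`-th coordinate: `1` for the first `n - k` coordinates, `p_i` for the
remaining ones. -/
def expo (n k : ℕ) (hk : k ≤ n) (p : Fin k → ℕ) (j : Fin n) : ℕ :=
  if _h : (j : ℕ) < n - k then 1 else p ⟨(j : ℕ) - (n - k), by have := j.isLt; omega⟩

/-- The weighted polynomial `∑ |z_j|^(2 q_j)`, whose sublevel set is the pseudoellipsoid. -/
noncomputable def rho {n : ℕ} (q : Fin n → ℕ) (z : Cn n) : ℝ := ∑ j, ‖z j‖ ^ (2 * q j)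

lemma phiMap_apply {n k : ℕ} (hk : k ≤ n) (p : Fin k → ℕ) (z : Cn n) (j : Fin n) :
    phiMap n k hk p z j = z j ^ expo n k hk p j := by
  simp only [phiMap, expo, EuclideanSpace.equiv, PiLp.coe_symm_continuousLinearEquiv]
  split_ifs <;> simp

lemma pseudoEllipsoid_eq {n k : ℕ} (hk : k ≤ n) (p : Fin k → ℕ) :
    pseudoEllipsoid n k hk p = {z | rho (expo n k hk p) z < 1} := by
  ext z
  simp only [pseudoEllipsoid, rho, Set.mem_ofPred_eq]
  have h : n - k + k = n := by omega
  rw [← (finCongr h).sum_comp, Fin.sum_univ_add]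
  have h1 : ∀ i : Fin (n - k), expo n k hk p (finCongr h (Fin.castAdd k i)) = 1 := by
    intro i; simp [expo]
  have h2 : ∀ i : Fin k, expo n k hk p (finCongr h (Fin.natAdd (n - k) i)) = p i := by
    intro i; simp [expo]
  simp only [h1, h2]
  rfl

lemma one_le_expo {n k : ℕ} (hk : k ≤ n) (p : Fin k → ℕ) (hp : ∀ i, 2 ≤ p i) (j : Fin n) :
    1 ≤ expo n k hk p j := by
  unfold expo
  split_ifs
  · exact le_rfl
  · exact le_trans (by norm_num) (hp _)

lemma norm_phiMap_sq {n k : ℕ} (hk : k ≤ n) (p : Fin k → ℕ) (z : Cn n) :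
    ‖phiMap n k hk p z‖ ^ 2 = rho (expo n k hk p) z := by
  simp only [EuclideanSpace.norm_sq_eq, phiMap_apply, rho, norm_pow, ← pow_mul, mul_comm]

section Rho

variable {n : ℕ} {q : Fin n → ℕ}

lemma continuous_rho : Continuous (rho q) := by
  unfold rho
  fun_prop

lemma rho_nonneg (z : Cn n) : 0 ≤ rho q z := Finset.sum_nonneg fun _ _ => by positivity

lemma isOpen_rho_lt : IsOpen {z : Cn n | rho q z < 1} := isOpen_lt continuous_rho continuous_const

lemma convex_rho_lt : Convex ℝ {z : Cn n | rho q z < 1} := by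
  have h : ConvexOn ℝ univ (rho q) := by
    have : rho q = ∑ j, fun z : Cn n => ‖z j‖ ^ (2 * q j) := by
      ext z; simp [rho]
    rw [this]
    refine Finset.sum_induction _ (fun f => ConvexOn ℝ univ f) (fun _ _ ha hb => ha.add hb)
      (convexOn_const 0 convex_univ) fun j _ => ?_
    have h1 : ConvexOn ℝ univ fun z : Cn n => ‖z j‖ :=
      (convexOn_univ_norm (E := ℂ)).comp_linearMap
        ((EuclideanSpace.proj j : Cn n →L[ℂ] ℂ).restrictScalars ℝ : Cn n →ₗ[ℝ] ℂ)
    exact h1.pow (fun _ _ => norm_nonneg _) _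
  simpa using h.convex_lt 1

lemma norm_coord_le_one {z : Cn n} (hz : rho q z < 1) (j : Fin n) :
    ‖z j‖ ≤ 1 := by
  by_contra! h
  have h1 : ‖z j‖ ^ (2 * q j) ≤ rho q z :=
    Finset.single_le_sum (f := fun j => ‖z j‖ ^ (2 * q j)) (fun _ _ => by positivity)
      (Finset.mem_univ j)
  have h2 : 1 ≤ ‖z j‖ ^ (2 * q j) := one_le_pow₀ h.le
  linarith

lemma isBounded_rho_lt : Bornology.IsBounded {z : Cn n | rho q z < 1} := by
  refine (isBounded_iff_forall_norm_le).2 ⟨Real.sqrt n, fun z hz => ?_⟩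
  rw [EuclideanSpace.norm_eq]
  refine Real.sqrt_le_sqrt ?_
  calc ∑ i, ‖z i‖ ^ 2 ≤ ∑ _i : Fin n, (1 : ℝ) :=
        Finset.sum_le_sum fun i _ => pow_le_one₀ (norm_nonneg _) (norm_coord_le_one hz i)
    _ = n := by simp

lemma rho_eq_one_of_mem_frontier {z : Cn n} (hz : z ∈ frontier {z : Cn n | rho q z < 1}) :
    rho q z = 1 := by
  have h1 : rho q z ≤ 1 := by
    have : closure {z : Cn n | rho q z < 1} ⊆ {z | rho q z ≤ 1} :=
      closure_minimal (fun z (hz : rho q z < 1) => show rho q z ≤ 1 from hz.le) (isClosed_le continuous_rho continuous_const)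
    exact this hz.1
  have h2 : ¬ rho q z < 1 := by
    have := hz.2
    rwa [isOpen_rho_lt.interior_eq] at this
  linarith [not_lt.1 h2]

/-- The weighted dilation with parameter `s > 0`, multiplying the `j`-th coordinate by
`s ^ (1 / (2 q_j))`; it multiplies `rho` by `s`. -/
noncomputable def dil (q : Fin n → ℕ) (s : ℝ) (z : Cn n) : Cn n :=
  WithLp.toLp 2 fun j => (s ^ (1 / (2 * (q j : ℝ))) : ℝ) • z j

/-- The retraction of `ℂⁿ \ {0}` onto `{rho = 1}` along the weighted dilations. -/
noncomputable def retr (q : Fin n → ℕ) (z : Cn n) : Cn n := dil q (rho q z)⁻¹ z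

lemma rho_dil (hq : ∀ j, 1 ≤ q j) {s : ℝ} (hs : 0 < s) (z : Cn n) :
    rho q (dil q s z) = s * rho q z := by
  simp only [rho, dil, norm_smul, mul_pow, Finset.mul_sum]
  refine Finset.sum_congr rfl fun j _ => ?_
  congr 1
  have : (q j : ℝ) ≠ 0 := by have := hq j; positivity
  rw [Real.norm_of_nonneg (by positivity), ← Real.rpow_natCast, ← Real.rpow_mul hs.le]
  push_cast
  rw [one_div, inv_mul_cancel₀ (by positivity), Real.rpow_one]

lemma retr_dil (hq : ∀ j, 1 ≤ q j) {s : ℝ} (hs : 0 < s) {z : Cn n} (hz : rho q z = 1) :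
    retr q (dil q s z) = z := by
  unfold retr
  rw [rho_dil hq hs, hz, mul_one]
  ext j
  simp only [dil, smul_smul]
  rw [← Real.mul_rpow (by positivity) hs.le, inv_mul_cancel₀ hs.ne', Real.one_rpow, one_smul]

lemma differentiable_rho : Differentiable ℝ (rho q) := by
  have h : rho q = fun z : Cn n => ∑ j, (‖z j‖ ^ 2) ^ q j := by
    ext z
    simp only [rho, pow_mul]
  rw [h]
  refine Differentiable.fun_sum fun j _ => Differentiable.pow ?_ _
  have : Differentiable ℝ fun z : Cn n => z j :=
    ((EuclideanSpace.proj j : Cn n →L[ℂ] ℂ).restrictScalars ℝ).differentiable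
  exact this.norm_sq ℝ

lemma differentiableAt_retr {z : Cn n} (hz : rho q z ≠ 0) : DifferentiableAt ℝ (retr q) z := by
  have h : ∀ j, DifferentiableAt ℝ (fun z => retr q z j) z := by
    intro j
    have h1 : DifferentiableAt ℝ (fun z : Cn n => z j) z :=
      ((EuclideanSpace.proj j : Cn n →L[ℂ] ℂ).restrictScalars ℝ).differentiableAt
    have h2 : DifferentiableAt ℝ (fun z : Cn n => ((rho q z)⁻¹ ^ (1 / (2 * (q j : ℝ))) : ℝ)) z :=
      ((differentiable_rho z).inv hz).rpow_const (Or.inl (inv_ne_zero hz))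
    exact h2.smul h1
  exact (differentiableAt_piLp 2).2 h

end Rho

/-! ### A boundary value without critical preimages -/

/-- The derivative of a `C¹` extension of a holomorphic map is complex linear on the closure. -/
lemma fderiv_I_smul_of_mem_closure {n : ℕ} {E O : Set (Cn n)} {F g : Cn n → Cn n}
    (hE : IsOpen E) (hO : IsOpen O) (hEO : closure E ⊆ O) (hg : ContDiffOn ℝ 1 g O)
    (hgF : EqOn g F E) (hF : DifferentiableOn ℂ F E) {x : Cn n} (hx : x ∈ closure E) (u : Cn n) :
    fderiv ℝ g x (Complex.I • u) = Complex.I • fderiv ℝ g x u := by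
  have hc : ContinuousOn (fderiv ℝ g) O := hg.continuousOn_fderiv_of_isOpen hO le_rfl
  have hEq : EqOn (fun x => fderiv ℝ g x (Complex.I • u)) (fun x => Complex.I • fderiv ℝ g x u)
      E := by
    intro z hz
    have h1 : fderiv ℝ g z = fderiv ℝ F z :=
      (hgF.eventuallyEq_of_mem (hE.mem_nhds hz)).fderiv_eq
    have h2 := fderiv_real_eq ((hF z hz).differentiableAt (hE.mem_nhds hz))
    simp only [h1, h2, ContinuousLinearMap.coe_restrictScalars', map_smul]
  have hc' : ContinuousOn (fderiv ℝ g) (closure E) := hc.mono hEO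
  have hcu : ContinuousOn (fun x => fderiv ℝ g x u) (closure E) :=
    hc'.clm_apply continuousOn_const
  have hcI : ContinuousOn (fun x => Complex.I • fderiv ℝ g x u) (closure E) :=
    hcu.const_smul Complex.I
  exact hEq.of_subset_closure (hc'.clm_apply continuousOn_const) hcI subset_closure le_rfl hx

/-- A proper map sends boundary points outside the target. -/
lemma not_mem_of_mem_frontier {n : ℕ} {E O Ω : Set (Cn n)} {F g : Cn n → Cn n}
    (hE : IsOpen E) (hO : IsOpen O) (hEO : closure E ⊆ O) (hg : ContinuousOn g O)
    (hgF : EqOn g F E) (hΩ : IsOpen Ω) (hprop : ProperOn n F E Ω) {x : Cn n}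
    (hx : x ∈ frontier E) : g x ∉ Ω := by
  intro hxΩ
  obtain ⟨ε, hε, hball⟩ := Metric.nhds_basis_closedBall.mem_iff.1 (hΩ.mem_nhds hxΩ)
  have hK := (hprop _ hball (isCompact_closedBall _ _)).isClosed
  have hxE : x ∉ E := by
    have := hx.2
    rwa [hE.interior_eq] at this
  have hcl : x ∈ closure {z ∈ E | F z ∈ closedBall (g x) ε} := by
    rw [mem_closure_iff_nhds]
    intro N hN
    have hgx : g ⁻¹' closedBall (g x) ε ∈ 𝓝 x :=
      (hg.continuousAt (hO.mem_nhds (hEO hx.1))) (closedBall_mem_nhds _ hε)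
    obtain ⟨z, ⟨hzN, hzg⟩, hzE⟩ := mem_closure_iff_nhds.1 hx.1 _ (inter_mem hN hgx)
    refine ⟨z, hzN, hzE, ?_⟩
    rw [← hgF hzE]
    exact hzg
  rw [hK.closure_eq] at hcl
  exact hxE hcl.1

/-- There is a boundary point `w₀` of the target such that over `w₀` the extended map is
a local diffeomorphism and all preimages avoid the coordinate hyperplanes.

The sweep `G z = g (retr z) + (rho z - 1) v` is critical wherever `retr z` is a critical point of
`g`, because the complex-linear derivative of `g` there has real corank at least two. Hence the
set of translates `g c + t v`, with `c` a bad boundary point, is Lebesgue null and misses some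
`ω ∈ Ω`. The point at which the ray from `ω` in the direction `-v` leaves `Ω` is suitable. -/
lemma exists_good_boundary_point {n : ℕ} (hn : 0 < n) {q : Fin n → ℕ} (hq : ∀ j, 1 ≤ q j)
    {E O Ω : Set (Cn n)} {F g : Cn n → Cn n} (hEq : E = {z | rho q z < 1})
    (hO : IsOpen O) (hEO : closure E ⊆ O) (hg : ContDiffOn ℝ 1 g O)
    (hgF : EqOn g F E) (hF : DifferentiableOn ℂ F E) (hΩ : IsOpen Ω) (hΩne : Ω.Nonempty)
    (hmaps : MapsTo F E Ω) (hsurj : SurjOn F E Ω) :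
    ∃ w₀ ∈ frontier Ω, (∃ x ∈ frontier E, g x = w₀) ∧ ∀ x ∈ closure E, g x = w₀ →
      x ∈ frontier E ∧ (fderiv ℝ g x).det ≠ 0 ∧ ∀ j, x j ≠ 0 := by
  have hE : IsOpen E := hEq ▸ isOpen_rho_lt
  have hEb : Bornology.IsBounded E := hEq ▸ isBounded_rho_lt
  have hEc : IsCompact (closure E) := hEb.isCompact_closure
  have hρ : ∀ x ∈ frontier E, rho q x = 1 := fun x hx => rho_eq_one_of_mem_frontier (hEq ▸ hx)
  have himc : IsCompact (g '' closure E) := hEc.image_of_continuousOn (hg.continuousOn.mono hEO)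
  have hclΩ : closure Ω ⊆ g '' closure E := by
    refine closure_minimal (fun w hw => ?_) himc.isClosed
    obtain ⟨z, hz, rfl⟩ := hsurj hw
    exact ⟨z, subset_closure hz, hgF hz⟩
  have hfr : ∀ x ∈ closure E, g x ∈ frontier Ω → x ∈ frontier E := by
    intro x hx hgx
    refine ⟨hx, ?_⟩
    rw [hE.interior_eq]
    intro hxE
    refine hgx.2 ?_
    rw [hΩ.interior_eq, hgF hxE]
    exact hmaps hxE
  let v : Cn n := EuclideanSpace.single ⟨0, hn⟩ 1
  let G : Cn n → Cn n := fun z => g (retr q z) + (rho q z - 1) • v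
  let G' : Cn n → Cn n →L[ℝ] Cn n := fun z =>
    (fderiv ℝ g (retr q z)).comp (fderiv ℝ (retr q) z) + (fderiv ℝ (rho q) z).smulRight v
  have hG : ∀ z, rho q z ≠ 0 → retr q z ∈ frontier E → HasFDerivAt G (G' z) z := by
    intro z hz hrz
    have h1 : HasFDerivAt g (fderiv ℝ g (retr q z)) (retr q z) :=
      ((hg.contDiffAt (hO.mem_nhds (hEO hrz.1))).differentiableAt one_ne_zero).hasFDerivAt
    have h2 := h1.comp z (differentiableAt_retr hz).hasFDerivAt
    have h3 := ((differentiable_rho (q := q) z).hasFDerivAt.sub_const 1).smul_const v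
    exact h2.add h3
  let S₁ : Set (Cn n) := {z | rho q z ≠ 0 ∧ retr q z ∈ frontier E ∧
    (fderiv ℝ g (retr q z)).det = 0}
  let S₂ : Fin n → Set (Cn n) := fun j => {z | rho q z ≠ 0 ∧ retr q z ∈ frontier E ∧ z j = 0}
  let μ : Measure (Cn n) := Measure.addHaar
  have hS₁ : μ (G '' S₁) = 0 := by
    refine addHaar_image_eq_zero_of_det_fderivWithin_eq_zero μ (f' := G')
      (fun z hz => (hG z hz.1 hz.2.1).hasFDerivWithinAt) fun z hz => ?_
    exact det_eq_zero_of_rank_one_perturbation _ _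
      (fderiv_I_smul_of_mem_closure hE hO hEO hg hgF hF hz.2.1.1) hz.2.2 _ _
  have hS₂ : ∀ j, μ (G '' S₂ j) = 0 := by
    intro j
    refine addHaar_image_eq_zero_of_differentiableOn_of_addHaar_eq_zero μ
      (fun z hz => (hG z hz.1 hz.2.1).differentiableAt.differentiableWithinAt) ?_
    let H : Submodule ℝ (Cn n) :=
      LinearMap.ker ((EuclideanSpace.proj j : Cn n →L[ℂ] ℂ).restrictScalars ℝ : Cn n →ₗ[ℝ] ℂ)
    have hH : H ≠ ⊤ := by
      intro h
      have : EuclideanSpace.single j (1 : ℂ) ∈ H := h ▸ Submodule.mem_top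
      have h0 : (EuclideanSpace.single j (1 : ℂ) : Cn n) j = 0 := this
      simp at h0
    refine measure_mono_null (t := (H : Set (Cn n))) (fun z hz => ?_)
      (Measure.addHaar_submodule μ H hH)
    exact hz.2.2
  have hnull : μ (G '' S₁ ∪ ⋃ j, G '' S₂ j) = 0 :=
    measure_union_null hS₁ (measure_iUnion_null hS₂)
  have hpos : 0 < μ Ω := hΩ.measure_pos μ hΩne
  obtain ⟨ω, hωΩ, hω⟩ : ∃ ω ∈ Ω, ω ∉ G '' S₁ ∪ ⋃ j, G '' S₂ j := by
    by_contra! h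
    exact hpos.ne' (measure_mono_null h hnull)
  -- the ray from `ω` leaves the bounded set `Ω`
  obtain ⟨t, ht, htΩ⟩ : ∃ t : ℝ, 0 ≤ t ∧ ω - t • v ∈ frontier Ω := by
    by_contra! h
    have hpre : IsPreconnected ((fun t : ℝ => ω - t • v) '' Ici 0) :=
      isPreconnected_Ici.image _ (by fun_prop)
    have hsub := hpre.subset_of_closure_inter_subset hΩ
      ⟨ω, ⟨0, by simp, by simp⟩, hωΩ⟩ (by
        rintro _ ⟨hcl, t, ht, rfl⟩
        by_contra hnot
        exact h t ht ⟨hcl, by rwa [hΩ.interior_eq]⟩)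
    obtain ⟨R, hR⟩ := isBounded_iff_forall_norm_le.1 himc.isBounded
    have h1 : ∀ t : ℝ, 0 ≤ t → ‖ω - t • v‖ ≤ R := fun t ht =>
      hR _ (hclΩ (subset_closure (hsub ⟨t, ht, rfl⟩)))
    have hR0 : 0 ≤ R := le_trans (norm_nonneg _) (h1 0 le_rfl)
    have hnv : ‖v‖ = 1 := by simp [v]
    have h2 := h1 (R + ‖ω‖ + 1) (by positivity)
    have h3 : ‖(R + ‖ω‖ + 1) • v‖ ≤ ‖ω‖ + ‖ω - (R + ‖ω‖ + 1) • v‖ := by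
      have := norm_sub_le ω (ω - (R + ‖ω‖ + 1) • v)
      simpa using this
    rw [norm_smul, hnv, mul_one, Real.norm_of_nonneg (by positivity)] at h3
    linarith
  refine ⟨ω - t • v, htΩ, ?_, fun x hx hgx => ?_⟩
  · obtain ⟨x, hx, hgx⟩ := hclΩ htΩ.1
    exact ⟨x, hfr x hx (hgx ▸ htΩ), hgx⟩
  have hxf : x ∈ frontier E := hfr x hx (hgx ▸ htΩ)
  -- `G` takes the value `ω` at the dilate of `x` on which `rho = 1 + t`
  have hs : (0 : ℝ) < 1 + t := by linarith
  have hr := retr_dil hq hs (hρ x hxf)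
  have hρ' : rho q (dil q (1 + t) x) = 1 + t := by rw [rho_dil hq hs, hρ x hxf, mul_one]
  have hGx : G (dil q (1 + t) x) = ω := by
    simp only [G, hr, hρ', hgx]
    simp
  refine ⟨hxf, fun hdet => hω (Or.inl ⟨_, ⟨?_, ?_, ?_⟩, hGx⟩), fun j hj =>
    hω (Or.inr (mem_iUnion.2 ⟨j, _, ⟨?_, ?_, ?_⟩, hGx⟩))⟩
  · rw [hρ']; exact hs.ne'
  · rwa [hr]
  · rwa [hr]
  · rw [hρ']; exact hs.ne'
  · rwa [hr]
  · simp [dil, hj]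

/-! ### Sheets over a good boundary value -/

lemma contDiff_phiMap {n k : ℕ} (hk : k ≤ n) (p : Fin k → ℕ) : ContDiff ℂ 1 (phiMap n k hk p) := by
  rw [contDiff_euclidean]
  intro j
  simp only [phiMap_apply]
  exact ((EuclideanSpace.proj j : Cn n →L[ℂ] ℂ).contDiff).pow _

/-- Off the coordinate hyperplanes `φ^(p)` is a local diffeomorphism. -/
lemma det_fderiv_phiMap_ne_zero {n k : ℕ} (hk : k ≤ n) (p : Fin k → ℕ) (hp : ∀ i, 2 ≤ p i)
    {z : Cn n} (hz : ∀ j, z j ≠ 0) : (fderiv ℝ (phiMap n k hk p) z).det ≠ 0 := by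
  have hd : DifferentiableAt ℂ (phiMap n k hk p) z :=
    (contDiff_phiMap hk p).contDiffAt.differentiableAt one_ne_zero
  refine det_ne_zero_of_injective ?_
  rw [fderiv_real_eq hd]
  refine (injective_iff_map_eq_zero _).2 fun u hu => ?_
  ext j
  have h1 : HasFDerivAt (fun z => phiMap n k hk p z j)
      ((EuclideanSpace.proj j : Cn n →L[ℂ] ℂ).comp (fderiv ℂ (phiMap n k hk p) z)) z :=
    (EuclideanSpace.proj j : Cn n →L[ℂ] ℂ).hasFDerivAt.comp z hd.hasFDerivAt
  have h2 : HasFDerivAt (fun z : Cn n => z j ^ expo n k hk p j)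
      (((expo n k hk p j : ℂ) * z j ^ (expo n k hk p j - 1)) •
        (EuclideanSpace.proj j : Cn n →L[ℂ] ℂ)) z := by
    have := (hasDerivAt_pow (expo n k hk p j) (z j)).comp_hasFDerivAt z
      (EuclideanSpace.proj j : Cn n →L[ℂ] ℂ).hasFDerivAt
    exact this
  simp only [phiMap_apply] at h1
  have h3 := congrArg (fun T : Cn n →L[ℂ] ℂ => T u) (h1.unique h2)
  have hu' : fderiv ℂ (phiMap n k hk p) z u = 0 := hu
  simp only [ContinuousLinearMap.comp_apply, hu', map_zero] at h3
  have h4 : (expo n k hk p j : ℂ) * z j ^ (expo n k hk p j - 1) ≠ 0 := by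
    have := one_le_expo hk p hp j
    exact mul_ne_zero (Nat.cast_ne_zero.2 (by omega)) (pow_ne_zero _ (hz j))
  have h5 : (0 : ℂ) = ((expo n k hk p j : ℂ) * z j ^ (expo n k hk p j - 1)) * u j := h3
  simpa [h4] using h5.symm

/-- The local picture over a good boundary point `w₀`: the fibre of the extension `g` is a finite
set of points in pairwise disjoint open sets on which `g` and `φ` are injective with invertible
derivatives, and these open sets contain all points of `closure E` lying over a neighbourhood of
`w₀`. -/
lemma exists_nhds_of_fibre {n : ℕ} {E O : Set (Cn n)} {g φ : Cn n → Cn n} {w₀ : Cn n}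
    (hEc : IsCompact (closure E)) (hO : IsOpen O) (hEO : closure E ⊆ O) (hg : ContDiffOn ℝ 1 g O)
    (hφ : ContDiff ℝ 1 φ)
    (hgood : ∀ x ∈ closure E, g x = w₀ →
      (fderiv ℝ g x).det ≠ 0 ∧ (fderiv ℝ φ x).det ≠ 0) :
    {x ∈ closure E | g x = w₀}.Finite ∧ ∃ (N : Cn n → Set (Cn n)) (V : Set (Cn n)),
      IsOpen V ∧ w₀ ∈ V ∧
      (∀ x ∈ closure E, g x = w₀ → x ∈ N x ∧ IsOpen (N x) ∧ N x ⊆ O ∧ InjOn g (N x) ∧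
        InjOn φ (N x) ∧ (∀ z ∈ N x, (fderiv ℝ g z).det ≠ 0) ∧
        ∀ z ∈ N x, (fderiv ℝ φ z).det ≠ 0) ∧
      {x ∈ closure E | g x = w₀}.PairwiseDisjoint N ∧
      ∀ z ∈ closure E, g z ∈ V → ∃ x ∈ closure E, g x = w₀ ∧ z ∈ N x := by
  have hgat : ∀ z ∈ O, ContDiffAt ℝ 1 g z := fun z hz => hg.contDiffAt (hO.mem_nhds hz)
  have hdetg : ContinuousOn (fun z => (fderiv ℝ g z).det) O :=
    ContinuousLinearMap.continuous_det.comp_continuousOn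
      (hg.continuousOn_fderiv_of_isOpen hO le_rfl)
  have hdetφ : Continuous fun z => (fderiv ℝ φ z).det :=
    ContinuousLinearMap.continuous_det.comp (hφ.continuous_fderiv one_ne_zero)
  have hloc : ∀ x ∈ closure E, g x = w₀ → ∃ N, x ∈ N ∧ IsOpen N ∧ N ⊆ O ∧ InjOn g N ∧
      InjOn φ N ∧ (∀ z ∈ N, (fderiv ℝ g z).det ≠ 0) ∧ ∀ z ∈ N, (fderiv ℝ φ z).det ≠ 0 := by
    intro x hx hgx
    obtain ⟨hd1, hd2⟩ := hgood x hx hgx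
    obtain ⟨N₁, hN₁, hx₁, hi₁⟩ := exists_injOn_of_det_ne_zero (hgat x (hEO hx)) hd1
    obtain ⟨N₂, hN₂, hx₂, hi₂⟩ := exists_injOn_of_det_ne_zero hφ.contDiffAt hd2
    have hN₃ : IsOpen (O ∩ (fun z => (fderiv ℝ g z).det) ⁻¹' {0}ᶜ) :=
      hdetg.isOpen_inter_preimage hO isOpen_compl_singleton
    have hN₄ : IsOpen ((fun z => (fderiv ℝ φ z).det) ⁻¹' {0}ᶜ) :=
      isOpen_compl_singleton.preimage hdetφ
    refine ⟨N₁ ∩ N₂ ∩ (O ∩ (fun z => (fderiv ℝ g z).det) ⁻¹' {0}ᶜ) ∩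
      (fun z => (fderiv ℝ φ z).det) ⁻¹' {0}ᶜ, ⟨⟨⟨hx₁, hx₂⟩, hEO hx, hd1⟩, hd2⟩,
      ((hN₁.inter hN₂).inter hN₃).inter hN₄, fun z hz => hz.1.2.1,
      hi₁.mono fun z hz => hz.1.1.1, hi₂.mono fun z hz => hz.1.1.2,
      fun z hz => hz.1.2.2, fun z hz => hz.2⟩
  choose! N hxN hNo hNO hNg hNφ hNdg hNdφ using hloc
  have hgc : ContinuousOn g (closure E) := hg.continuousOn.mono hEO
  have hΦc : IsCompact {x ∈ closure E | g x = w₀} := by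
    have : IsClosed (closure E ∩ g ⁻¹' {w₀}) :=
      hgc.preimage_isClosed_of_isClosed isClosed_closure isClosed_singleton
    exact hEc.of_isClosed_subset this inter_subset_left
  have hfin : {x ∈ closure E | g x = w₀}.Finite := by
    obtain ⟨t, ht, hcov⟩ := hΦc.elim_nhds_subcover N
      fun x hx => (hNo x hx.1 hx.2).mem_nhds (hxN x hx.1 hx.2)
    refine t.finite_toSet.subset fun x hx => ?_
    obtain ⟨y, hyt, hxy⟩ := mem_iUnion₂.1 (hcov hx)
    have hy := ht y hyt
    have : x = y := hNg y hy.1 hy.2 hxy (hxN y hy.1 hy.2) (hx.2.trans hy.2.symm)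
    exact this ▸ hyt
  obtain ⟨S, hS, hdisj⟩ := hfin.t2_separation
  have hMo : ∀ x ∈ closure E, g x = w₀ → IsOpen (N x ∩ S x) :=
    fun x hx hgx => (hNo x hx hgx).inter (hS x).2
  let K : Set (Cn n) := closure E \ ⋃ x ∈ {x ∈ closure E | g x = w₀}, N x ∩ S x
  have hK : IsCompact K :=
    hEc.diff (isOpen_biUnion fun x hx => hMo x hx.1 hx.2)
  have hgK : IsClosed (g '' K) :=
    (hK.image_of_continuousOn (hgc.mono sdiff_subset)).isClosed
  refine ⟨hfin, fun x => N x ∩ S x, (g '' K)ᶜ, hgK.isOpen_compl, ?_, ?_, ?_, ?_⟩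
  · rintro ⟨x, hx, hgx⟩
    exact hx.2 (mem_biUnion (show x ∈ {x ∈ closure E | g x = w₀} from ⟨hx.1, hgx⟩)
      ⟨hxN x hx.1 hgx, (hS x).1⟩)
  · intro x hx hgx
    exact ⟨⟨hxN x hx hgx, (hS x).1⟩, hMo x hx hgx, fun z hz => hNO x hx hgx hz.1,
      (hNg x hx hgx).mono inter_subset_left, (hNφ x hx hgx).mono inter_subset_left,
      fun z hz => hNdg x hx hgx z hz.1, fun z hz => hNdφ x hx hgx z hz.1⟩
  · exact hdisj.mono fun x => inter_subset_right
  · intro z hz hgz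
    by_contra! h
    refine hgz ⟨z, ⟨hz, fun hmem => ?_⟩, rfl⟩
    obtain ⟨x, hx, hzx⟩ := mem_iUnion₂.1 hmem
    exact h x hx.1 hx.2 hzx

theorem related_sequences_to_boundary
    (n k m : ℕ) (hn : 0 < n) (hk0 : 0 < k) (hk : k ≤ n) (hm : 1 < m)
    (p : Fin k → ℕ) (hp : ∀ i, 2 ≤ p i)
    (F : Cn n → Cn n) (Ω : Set (Cn n)) (hΩ : IsOpen Ω) (hΩc : IsConnected Ω)
    (hFholo : DifferentiableOn ℂ F (pseudoEllipsoid n k hk p))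
    (hFmaps : MapsTo F (pseudoEllipsoid n k hk p) Ω)
    (hFsurj : SurjOn F (pseudoEllipsoid n k hk p) Ω)
    (hFproper : ProperOn n F (pseudoEllipsoid n k hk p) Ω)
    (hFmult : HasMultiplicity n F (pseudoEllipsoid n k hk p) Ω m)
    (hFC1 : HasC1Extension n F (pseudoEllipsoid n k hk p))
    :
    ∃ (x : Fin m → ℕ → Cn n) (x0 : Fin m → Cn n) (U : Fin m → Set (Cn n))
      (W : Set (Cn n)),
      (∀ i l, x i l ∈ pseudoEllipsoid n k hk p) ∧
      (∀ i j l, F (x i l) = F (x j l)) ∧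
      (∀ i, Tendsto (x i) atTop (nhds (x0 i))) ∧
      Function.Injective x0 ∧
      (∀ i, x0 i ∈ frontier (pseudoEllipsoid n k hk p)) ∧
      (∀ i, IsOpen (U i) ∧ IsConnected (U i) ∧ x0 i ∈ U i) ∧
      (Pairwise fun i j => Disjoint (U i) (U j)) ∧
      IsOpen W ∧ W ⊆ Ω ∧
      (∀ i, IsBiholoOn n F (U i ∩ pseudoEllipsoid n k hk p) W) ∧
      (∀ i, phiMap n k hk p '' (U i ∩ pseudoEllipsoid n k hk p) ⊆ Metric.ball 0 1 ∧
        IsBiholoOn n (phiMap n k hk p) (U i ∩ pseudoEllipsoid n k hk p)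
          (phiMap n k hk p '' (U i ∩ pseudoEllipsoid n k hk p))) := by
  have hEq := pseudoEllipsoid_eq hk p
  have hφball : ∀ z ∈ pseudoEllipsoid n k hk p, phiMap n k hk p z ∈ Metric.ball (0 : Cn n) 1 := by
    intro z hz
    rw [hEq] at hz
    have h1 : rho (expo n k hk p) z < 1 := hz
    rw [← norm_phiMap_sq] at h1
    rw [mem_ball_zero_iff]
    nlinarith [norm_nonneg (phiMap n k hk p z)]
  have hE : IsOpen (pseudoEllipsoid n k hk p) := hEq ▸ isOpen_rho_lt
  have hEconv : Convex ℝ (pseudoEllipsoid n k hk p) := hEq ▸ convex_rho_lt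
  have hEc : IsCompact (closure (pseudoEllipsoid n k hk p)) := by
    rw [hEq]
    exact isBounded_rho_lt.isCompact_closure
  obtain ⟨O, g, hO, hEO, hg, hgF⟩ := hFC1
  have hφ : ContDiff ℝ 1 (phiMap n k hk p) := (contDiff_phiMap hk p).restrict_scalars ℝ
  have hφhol : Differentiable ℂ (phiMap n k hk p) :=
    (contDiff_phiMap hk p).differentiable one_ne_zero
  obtain ⟨w₀, hw₀, ⟨x₁, hx₁f, hx₁⟩, hgood⟩ := exists_good_boundary_point hn (one_le_expo hk p hp)
    hEq hO hEO hg hgF hFholo hΩ hΩc.nonempty hFmaps hFsurj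
  obtain ⟨hfin, N, V, hVo, hw₀V, hN, hNdisj, hNV⟩ := exists_nhds_of_fibre hEc hO hEO hg hφ
    fun x hx hgx => ⟨(hgood x hx hgx).2.1,
      det_fderiv_phiMap_ne_zero hk p hp (hgood x hx hgx).2.2⟩
  have hnotΩ : ∀ x ∈ frontier (pseudoEllipsoid n k hk p), g x ∉ Ω := fun x hx =>
    not_mem_of_mem_frontier hE hO hEO hg.continuousOn hgF hΩ hFproper hx
  generalize pseudoEllipsoid n k hk p = E at *
  generalize phiMap n k hk p = φ at *
  have hgc : ContinuousOn g (closure E) := hg.continuousOn.mono hEO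
  have hgat : ∀ z ∈ O, ContDiffAt ℝ 1 g z := fun z hz => hg.contDiffAt (hO.mem_nhds hz)
  have hmemE : ∀ z ∈ closure E, g z ∈ Ω → z ∈ E := by
    intro z hz hgz
    by_contra hzE
    exact hnotΩ z ⟨hz, by rwa [hE.interior_eq]⟩ hgz
  have hFg : ∀ z ∈ E, F =ᶠ[𝓝 z] g := fun z hz =>
    (hgF.symm.eventuallyEq_of_mem (hE.mem_nhds hz))
  have hFat : ∀ z ∈ E, ContDiffAt ℝ 1 F z := fun z hz =>
    (hgat z (hEO (subset_closure hz))).congr_of_eventuallyEq (hFg z hz)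
  have hFder : ∀ z ∈ E, fderiv ℝ F z = fderiv ℝ g z := fun z hz => (hFg z hz).fderiv_eq
  -- the open set `W` and the ball it comes from
  obtain ⟨hx₁N, hN₁o, hN₁O, hN₁g, -, hN₁d, -⟩ := hN x₁ hx₁f.1 hx₁
  obtain ⟨δ, hδ, hδsub⟩ : ∃ δ > 0, closedBall x₁ δ ⊆ N x₁ ∩ g ⁻¹' V := by
    refine Metric.nhds_basis_closedBall.mem_iff.1 (inter_mem (hN₁o.mem_nhds hx₁N) ?_)
    exact (hgat x₁ (hEO hx₁f.1)).continuousAt (hVo.mem_nhds (hx₁ ▸ hw₀V))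
  have hBN : ball x₁ δ ⊆ N x₁ := fun z hz => (hδsub (ball_subset_closedBall hz)).1
  let T : Set (Cn n) := g '' ball x₁ δ
  have hTo : IsOpen T := isOpen_image_of_det_ne_zero isOpen_ball
    (fun z hz => hgat z (hN₁O (hBN hz))) fun z hz => hN₁d z (hBN hz)
  have hw₀T : w₀ ∈ T := ⟨x₁, mem_ball_self hδ, hx₁⟩
  obtain ⟨W, hWdef⟩ : ∃ W, W = g '' (ball x₁ δ ∩ E) := ⟨_, rfl⟩
  have hWo : IsOpen W := by
    rw [hWdef]
    exact isOpen_image_of_det_ne_zero (isOpen_ball.inter hE)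
      (fun z hz => hgat z (hN₁O (hBN hz.1))) fun z hz => hN₁d z (hBN hz.1)
  have hWΩ : W ⊆ Ω := by
    rw [hWdef]
    rintro _ ⟨z, hz, rfl⟩
    rw [hgF hz.2]
    exact hFmaps hz.2
  have hWV : W ⊆ V := by
    rw [hWdef]
    rintro _ ⟨z, hz, rfl⟩
    exact (hδsub (ball_subset_closedBall hz.1)).2
  have hWpre : IsPreconnected W := by
    rw [hWdef]
    exact ((convex_ball x₁ δ).inter hEconv).isPreconnected.image _
      (hgc.mono fun z hz => subset_closure hz.2)
  have hx₁cl : x₁ ∈ closure (ball x₁ δ ∩ E) :=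
    isOpen_ball.inter_closure ⟨mem_ball_self hδ, hx₁f.1⟩
  have hw₀cl : w₀ ∈ closure W := by
    rw [hWdef, ← hx₁]
    exact ((hgat x₁ (hEO hx₁f.1)).continuousAt.continuousWithinAt).mem_closure_image hx₁cl
  -- `W` is relatively closed in `Ω` near `w₀`, since `g` sends the boundary of `E` outside `Ω`
  have hWclosed : closure W ∩ T ∩ Ω ⊆ W := by
    rintro w ⟨⟨hwcl, z', hz', rfl⟩, hwΩ⟩
    have hsub : closure W ⊆ g '' (closedBall x₁ δ ∩ closure E) := by
      refine closure_minimal ?_ ((hEc.inter_left isClosed_closedBall).image_of_continuousOn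
        (hgc.mono inter_subset_right)).isClosed
      rw [hWdef]
      exact image_mono (inter_subset_inter ball_subset_closedBall subset_closure)
    obtain ⟨z, ⟨hzB, hzE⟩, hzz'⟩ := hsub hwcl
    have : z = z' := hN₁g (hδsub hzB).1 (hBN hz') hzz'
    subst this
    rw [hWdef]
    exact ⟨z, ⟨hz', hmemE z hzE hwΩ⟩, rfl⟩
  -- the sheets over `W`
  let A : Cn n → Set (Cn n) := fun y => {z | z ∈ N y ∧ z ∈ E ∧ F z ∈ W}
  have hAo : ∀ y ∈ closure E, g y = w₀ → IsOpen (A y) := by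
    intro y hy hgy
    have h1 : IsOpen (E ∩ F ⁻¹' W) := hFholo.continuousOn.isOpen_inter_preimage hE hWo
    exact (hN y hy hgy).2.1.inter h1
  have hAd : ∀ y ∈ closure E, g y = w₀ → ∀ z ∈ A y, (fderiv ℝ F z).det ≠ 0 := by
    intro y hy hgy z hz
    rw [hFder z hz.2.1]
    exact (hN y hy hgy).2.2.2.2.2.1 z hz.1
  have hAinj : ∀ y ∈ closure E, g y = w₀ → InjOn F (A y) := by
    intro y hy hgy z hz z' hz' h
    refine (hN y hy hgy).2.2.2.1 hz.1 hz'.1 ?_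
    rw [hgF hz.2.1, hgF hz'.2.1, h]
  -- the image of a sheet is open and, by properness, closed in the connected set `W`
  have hAimage : ∀ y ∈ closure E, g y = w₀ → (A y).Nonempty → F '' A y = W := by
    intro y hy hgy hne
    refine Subset.antisymm (by rintro _ ⟨z, hz, rfl⟩; exact hz.2.2) ?_
    refine hWpre.subset_of_closure_inter_subset
      (isOpen_image_of_det_ne_zero (hAo y hy hgy) (fun z hz => hFat z hz.2.1) (hAd y hy hgy)) ?_ ?_
    · obtain ⟨z, hz⟩ := hne
      exact ⟨F z, hz.2.2, z, hz, rfl⟩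
    · rintro w ⟨hwcl, hwW⟩
      have hsub : closure (F '' A y) ⊆ g '' (closure (N y) ∩ closure E) := by
        refine closure_minimal ?_ ((hEc.inter_left isClosed_closure).image_of_continuousOn
          (hgc.mono inter_subset_right)).isClosed
        rintro _ ⟨z, hz, rfl⟩
        exact ⟨z, ⟨subset_closure hz.1, subset_closure hz.2.1⟩, hgF hz.2.1⟩
      obtain ⟨z, ⟨hzN, hzE⟩, rfl⟩ := hsub hwcl
      have hzE' : z ∈ E := hmemE z hzE (hWΩ hwW)
      obtain ⟨y', hy', hgy', hzy'⟩ := hNV z hzE (hWV hwW)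
      have hyy' : y' = y := by
        by_contra hne'
        obtain ⟨u, hu', hu⟩ := mem_closure_iff.1 hzN _ (hN y' hy' hgy').2.1 hzy'
        exact Set.disjoint_left.1 (hNdisj ⟨hy', hgy'⟩ ⟨hy, hgy⟩ hne') hu' hu
      subst hyy'
      exact ⟨z, ⟨hzy', hzE', hgF hzE' ▸ hwW⟩, (hgF hzE').symm⟩
  -- there are exactly `m` nonempty sheets
  obtain ⟨J, hJdef⟩ : ∃ J, J = {y | (y ∈ closure E ∧ g y = w₀) ∧ (A y).Nonempty} := ⟨_, rfl⟩
  have hJ : ∀ y ∈ J, y ∈ closure E ∧ g y = w₀ ∧ (A y).Nonempty := by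
    intro y hy
    rw [hJdef] at hy
    exact ⟨hy.1.1, hy.1.2, hy.2⟩
  have hJfin : J.Finite := hfin.subset fun y hy => ⟨(hJ y hy).1, (hJ y hy).2.1⟩
  have hpre : ∀ w ∈ W, ∀ y ∈ J, ∃ z ∈ A y, F z = w := by
    intro w hw y hy
    have := hAimage y (hJ y hy).1 (hJ y hy).2.1 (hJ y hy).2.2
    rw [← this] at hw
    exact hw
  have hJcard : J.ncard = m := by
    obtain ⟨w, hw⟩ : W.Nonempty := closure_nonempty_iff.1 ⟨w₀, hw₀cl⟩
    have hreg : w ∈ Ω \ (F '' singularSet n F E) := by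
      refine ⟨hWΩ hw, ?_⟩
      rintro ⟨z, ⟨hzE, hz0⟩, rfl⟩
      have hgz : g z ∈ V := by rw [hgF hzE]; exact hWV hw
      obtain ⟨y, hy, hgy, hzy⟩ := hNV z (subset_closure hzE) hgz
      have hinj := injective_of_det_ne_zero (hAd y hy hgy z ⟨hzy, hzE, hw⟩)
      rw [fderiv_real_eq ((hFholo z hzE).differentiableAt (hE.mem_nhds hzE))] at hinj
      have hinj' : Function.Injective (fderiv ℂ F z : Cn n →ₗ[ℂ] Cn n) := hinj
      refine ((LinearMap.isUnit_iff_isUnit_det _).1 ((Module.End.isUnit_iff _).2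
        ⟨hinj', LinearMap.injective_iff_surjective.1 hinj'⟩)).ne_zero hz0
    rw [← hFmult w hreg]
    choose! s hsA hsF using hpre w hw
    refine Set.ncard_congr (fun y _ => s y) (fun y hy => ⟨(hsA y hy).2.1, hsF y hy⟩) ?_ ?_
    · intro y y' hy hy' hss
      by_contra hne
      have h1 := (hsA y hy).1
      have h2 := (hsA y' hy').1
      rw [show s y = s y' from hss] at h1
      exact Set.disjoint_left.1 (hNdisj ⟨(hJ y hy).1, (hJ y hy).2.1⟩
        ⟨(hJ y' hy').1, (hJ y' hy').2.1⟩ hne) h1 h2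
    · rintro z ⟨hzE, hzw⟩
      have hzw' : F z = w := hzw
      have hgz : g z ∈ V := by rw [hgF hzE, hzw']; exact hWV hw
      obtain ⟨y, hy, hgy, hzy⟩ := hNV z (subset_closure hzE) hgz
      have hzA : z ∈ A y := ⟨hzy, hzE, hzw' ▸ hw⟩
      have hyJ : y ∈ J := by rw [hJdef]; exact ⟨⟨hy, hgy⟩, ⟨z, hzA⟩⟩
      exact ⟨y, hyJ, hAinj y hy hgy (hsA y hyJ) hzA ((hsF y hyJ).trans hzw'.symm)⟩
  have : Finite J := hJfin
  have hcard : Nat.card J = m := by rw [Nat.card_coe_set_eq, hJcard]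
  let e : J ≃ Fin m := Finite.equivFinOfCardEq hcard
  -- sequences in the sheets over a sequence in `W` converging to `w₀`
  obtain ⟨ω, hωW, hω⟩ := mem_closure_iff_seq_limit.1 hw₀cl
  have hpre' : ∀ l, ∀ y ∈ J, ∃ z ∈ A y, F z = ω l := fun l => hpre _ (hωW l)
  choose! s hsA hsF using hpre'
  have hslim : ∀ y ∈ J, Tendsto (fun l => s l y) atTop (𝓝 y) := by
    intro y hy
    obtain ⟨hycl, hgy, -⟩ := hJ y hy
    obtain ⟨hyN, hNo, hNO, hNg, -, hNd, -⟩ := hN y hycl hgy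
    intro Q hQ
    have h1 : g '' (Q ∩ N y) ∈ 𝓝 w₀ := by
      rw [← hgy, ← map_nhds_eq_of_det_ne_zero (hgat y (hNO hyN)) (hNd y hyN)]
      exact image_mem_map (inter_mem hQ (hNo.mem_nhds hyN))
    rw [mem_map]
    filter_upwards [hω h1] with l hl
    obtain ⟨z, ⟨hzQ, hzN⟩, hz⟩ := hl
    have : z = s l y := hNg hzN (hsA l y hy).1 (by
      rw [hz, hgF (hsA l y hy).2.1, hsF l y hy])
    show s l y ∈ Q
    exact this ▸ hzQ
  -- by convexity of `ball y ε ∩ E`, the domain meets a small ball around `y` only in the sheet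
  have hball : ∀ y ∈ J, ∃ ε > 0,
      ball y ε ⊆ N y ∧ ball y ε ∩ E ⊆ A y ∧ (ball y ε ∩ A y).Nonempty := by
    intro y hy
    obtain ⟨hycl, hgy, -⟩ := hJ y hy
    obtain ⟨hyN, hNo, hNO, hNg, -, hNd, -⟩ := hN y hycl hgy
    obtain ⟨ε, hε, hsub⟩ : ∃ ε > 0, ball y ε ⊆ N y ∩ g ⁻¹' T :=
      Metric.mem_nhds_iff.1 (inter_mem (hNo.mem_nhds hyN)
        ((hgat y (hNO hyN)).continuousAt (hTo.mem_nhds (hgy ▸ hw₀T))))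
    have hne : (ball y ε ∩ A y).Nonempty := by
      obtain ⟨l, hl⟩ := ((hslim y hy).eventually (ball_mem_nhds y hε)).exists
      exact ⟨s l y, hl, hsA l y hy⟩
    refine ⟨ε, hε, fun z hz => (hsub hz).1, ?_, hne⟩
    refine ((convex_ball y ε).inter hEconv).isPreconnected.subset_of_closure_inter_subset
      (hAo y hycl hgy) ?_ ?_
    · obtain ⟨z, hz, hzA⟩ := hne
      exact ⟨z, ⟨hz, hzA.2.1⟩, hzA⟩
    · rintro z ⟨hzcl, hzb, hzE⟩
      refine ⟨(hsub hzb).1, hzE, hWclosed ⟨⟨?_, ?_⟩, hFmaps hzE⟩⟩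
      · have := (hFat z hzE).continuousAt.continuousWithinAt.mem_closure_image hzcl
        refine closure_mono ?_ this
        rintro _ ⟨u, hu, rfl⟩
        exact hu.2.2
      · rw [← hgF hzE]
        exact (hsub hzb).2
  choose! ε hε hεN hεA hεne using hball
  have hUE : ∀ y ∈ J, (ball y (ε y) ∪ A y) ∩ E = A y := by
    intro y hy
    refine Subset.antisymm ?_ fun z hz => ⟨Or.inr hz, hz.2.1⟩
    rintro z ⟨hz | hz, hzE⟩
    · exact hεA y hy ⟨hz, hzE⟩
    · exact hz
  have hUN : ∀ y ∈ J, ball y (ε y) ∪ A y ⊆ N y := fun y hy =>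
    union_subset (hεN y hy) fun z hz => hz.1
  have hbih : ∀ y ∈ J, IsBiholoOn n F (A y) W := by
    intro y hy
    obtain ⟨hycl, hgy, hne⟩ := hJ y hy
    rw [← hAimage y hycl hgy hne]
    exact isBiholoOn_image (hAo y hycl hgy) (fun z hz => hFat z hz.2.1) (hAd y hycl hgy)
      (hFholo.mono fun z hz => hz.2.1) (hAinj y hycl hgy)
  refine ⟨fun i l => s l (e.symm i), fun i => e.symm i,
    fun i => ball (e.symm i : Cn n) (ε (e.symm i)) ∪ A (e.symm i), W, ?_, ?_, ?_, ?_, ?_, ?_, ?_,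
    hWo, hWΩ, ?_, ?_⟩
  · exact fun i l => (hsA l _ (e.symm i).2).2.1
  · intro i j l
    rw [hsF l _ (e.symm i).2, hsF l _ (e.symm j).2]
  · exact fun i => hslim _ (e.symm i).2
  · exact Subtype.val_injective.comp e.symm.injective
  · intro i
    obtain ⟨hycl, hgy, -⟩ := hJ _ (e.symm i).2
    exact (hgood _ hycl hgy).1
  · intro i
    have hy := (e.symm i).2
    obtain ⟨hycl, hgy, -⟩ := hJ _ hy
    refine ⟨isOpen_ball.union (hAo _ hycl hgy), ?_, Or.inl (mem_ball_self (hε _ hy))⟩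
    obtain ⟨-, -, h, hh, hhbij, -⟩ := hbih _ hy
    have hAconn : IsPreconnected (A (e.symm i)) := by
      rw [← hhbij.image_eq]
      exact hWpre.image h hh.continuousOn
    refine ⟨⟨_, Or.inl (mem_ball_self (hε _ hy))⟩, ?_⟩
    exact (convex_ball _ _).isPreconnected.union' (hεne _ hy) hAconn
  · intro i j hij
    have hi := (e.symm i).2
    have hj := (e.symm j).2
    refine Disjoint.mono (hUN _ hi) (hUN _ hj) (hNdisj ⟨(hJ _ hi).1, (hJ _ hi).2.1⟩
      ⟨(hJ _ hj).1, (hJ _ hj).2.1⟩ ?_)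
    exact fun h => hij (e.symm.injective (Subtype.ext h))
  · intro i
    rw [hUE _ (e.symm i).2]
    exact hbih _ (e.symm i).2
  · intro i
    have hy := (e.symm i).2
    obtain ⟨hycl, hgy, -⟩ := hJ _ hy
    obtain ⟨-, -, -, -, hNφ, -, hNdφ⟩ := hN _ hycl hgy
    rw [hUE _ hy]
    refine ⟨?_, isBiholoOn_image (hAo _ hycl hgy) (fun z _ => hφ.contDiffAt)
      (fun z hz => hNdφ z hz.1) hφhol.differentiableOn (hNφ.mono fun z hz => hz.1)⟩
    rintro _ ⟨z, hz, rfl⟩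
    exact hφball z hz.2.1
end
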